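/- arXiv:2510.26324 — 3 statements merged into one kernel-verified Lean document; each statement's English description precedes it below -/
import Mathlib

section
/- Let α > 0 and let X be a random vector in ℝ^d with Lebesgue density π(x) proportional to exp(−V(x)), where V : ℝ^d → ℝ is twice continuously differentiable with ∇²V(x) ⪰ α I_d for all x. Let μ = E[X]. Then for every δ ∈ (0,1), P[ ‖X − μ‖ ≤ √(d/α) + √(2 ln(1/δ)/α) ] ≥ 1 − δ. -/
open MeasureTheory
open scoped Pointwise ENNReal

lemma bm_compact (K L C : Set ℝ) (hK : IsCompact K) (hL : IsCompact L) (hK0 : K.Nonempty)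
    (hL0 : L.Nonempty) (h : ∀ a ∈ K, ∀ b ∈ L, a + b ∈ C) :
    volume K + volume L ≤ volume C := by
  obtain ⟨k, hk, hkm⟩ := hK.exists_isGreatest hK0
  obtain ⟨l, hl, hlm⟩ := hL.exists_isLeast hL0
  have h1 : volume ((fun x => x + l) '' K) = volume K := by
    rw [Set.image_add_right]; simp
  have h2 : volume ((fun x => k + x) '' L) = volume L := by
    rw [Set.image_add_left]; simp
  have hm : MeasurableSet ((fun x => k + x) '' L) :=
    (hL.image (by fun_prop)).measurableSet
  have hdis : AEDisjoint volume ((fun x => x + l) '' K) ((fun x => k + x) '' L) := by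
    refine measure_mono_null (t := {k + l}) ?_ (by simp)
    rintro _ ⟨⟨a, ha, rfl⟩, ⟨b, hb, hab⟩⟩
    have := hkm ha
    have := hlm hb
    simp only [Set.mem_singleton_iff] at *
    linarith
  rw [← h1, ← h2, ← measure_union₀ hm.nullMeasurableSet hdis]
  apply measure_mono
  rintro _ (⟨a, ha, rfl⟩ | ⟨b, hb, rfl⟩)
  · exact h _ ha _ hl
  · exact h _ hk _ hb

lemma bm_one (A B C : Set ℝ) (hA : MeasurableSet A) (hB : MeasurableSet B) (hA0 : A.Nonempty)
    (hB0 : B.Nonempty) (h : ∀ a ∈ A, ∀ b ∈ B, a + b ∈ C) :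
    volume A + volume B ≤ volume C := by
  obtain ⟨a0, ha0⟩ := hA0
  obtain ⟨b0, hb0⟩ := hB0
  rw [hA.measure_eq_iSup_isCompact, hB.measure_eq_iSup_isCompact]
  simp_rw [iSup_and']
  refine ENNReal.biSup_add_biSup_le' ⟨∅, by simp⟩ ⟨∅, by simp⟩ ?_
  rintro K ⟨hKA, hK⟩ L ⟨hLB, hL⟩
  calc volume K + volume L ≤ volume (insert a0 K) + volume (insert b0 L) := by
        gcongr <;> simp
    _ ≤ volume C := by
        apply bm_compact _ _ _ (hK.insert _) (hL.insert _) (by simp) (by simp)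
        intro a ha b hb
        refine h a ?_ b ?_
        · rcases ha with rfl | ha
          exacts [ha0, hKA ha]
        · rcases hb with rfl | hb
          exacts [hb0, hLB hb]

lemma pl_real (t s : ℝ) (ht : 0 < t) (hs : 0 < s) (hts : t + s = 1) (f g h : ℝ → ℝ)
    (hf : Measurable f) (hg : Measurable g) (hh : Measurable h)
    (hf0 : ∀ x, 0 ≤ f x) (hg0 : ∀ x, 0 ≤ g x) (hh0 : ∀ x, 0 ≤ h x)
    (hf1 : ∀ x, f x ≤ 1) (hg1 : ∀ x, g x ≤ 1)
    (hfs : ∀ r < 1, ∃ x, r < f x) (hgs : ∀ r < 1, ∃ x, r < g x)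
    (H : ∀ x y, (f x) ^ t * (g y) ^ s ≤ h (t * x + s * y)) :
    ENNReal.ofReal t * (∫⁻ x, ENNReal.ofReal (f x)) + ENNReal.ofReal s * (∫⁻ x, ENNReal.ofReal (g x))
      ≤ ∫⁻ x, ENNReal.ofReal (h x) := by
  rw [lintegral_eq_lintegral_meas_lt _ (Filter.Eventually.of_forall hf0) hf.aemeasurable,
    lintegral_eq_lintegral_meas_lt _ (Filter.Eventually.of_forall hg0) hg.aemeasurable,
    lintegral_eq_lintegral_meas_lt _ (Filter.Eventually.of_forall hh0) hh.aemeasurable]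
  rw [← lintegral_const_mul' _ _ (by simp), ← lintegral_const_mul' _ _ (by simp)]
  have hanti : Antitone fun r : ℝ => ENNReal.ofReal t * volume {a | r < f a} := by
    intro r r' hr
    dsimp only
    gcongr
  rw [← lintegral_add_left hanti.measurable]
  refine setLIntegral_mono' measurableSet_Ioi ?_
  intro r hr
  simp only [Set.mem_Ioi] at hr
  rcases le_or_gt 1 r with h1 | h1
  · have e1 : {a | r < f a} = ∅ := by
      ext a; simp; exact (hf1 a).trans h1
    have e2 : {a | r < g a} = ∅ := by
      ext a; simp; exact (hg1 a).trans h1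
    simp [e1, e2]
  · have key : ∀ c : ℝ, 0 < c → ∀ A : Set ℝ, ENNReal.ofReal c * volume A = volume (c • A) := by
      intro c hc A
      rw [Measure.addHaar_smul]; simp [abs_of_pos hc]
    rw [key t ht, key s hs]
    apply bm_one
    · exact (measurableSet_lt measurable_const hf).const_smul_of_ne_zero ht.ne'
    · exact (measurableSet_lt measurable_const hg).const_smul_of_ne_zero hs.ne'
    · exact Set.Nonempty.smul_set (hfs r h1)
    · exact Set.Nonempty.smul_set (hgs r h1)
    · rintro _ ⟨x, hx, rfl⟩ _ ⟨y, hy, rfl⟩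
      simp only [Set.mem_ofPred_eq, smul_eq_mul] at *
      refine lt_of_lt_of_le ?_ (H x y)
      calc r = r ^ t * r ^ s := by rw [← Real.rpow_add hr, hts, Real.rpow_one]
        _ < _ := by
          have := Real.rpow_lt_rpow hr.le hx ht
          have := Real.rpow_lt_rpow hr.le hy hs
          have := Real.rpow_pos_of_pos hr t
          have := Real.rpow_pos_of_pos hr s
          gcongr

lemma amgm (t s : ℝ) (ht : 0 < t) (hs : 0 < s) (hts : t + s = 1) (a b : ℝ≥0∞) :
    a ^ t * b ^ s ≤ ENNReal.ofReal t * a + ENNReal.ofReal s * b := by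
  rcases eq_or_ne a ∞ with rfl | ha
  · simp [ENNReal.mul_top, ht]
  rcases eq_or_ne b ∞ with rfl | hb
  · simp [ENNReal.mul_top, hs]
  lift a to NNReal using ha
  lift b to NNReal using hb
  have := NNReal.geom_mean_le_arith_mean2_weighted ⟨t, ht.le⟩ ⟨s, hs.le⟩ a b (NNReal.eq hts)
  rw [← ENNReal.coe_rpow_of_nonneg _ ht.le, ← ENNReal.coe_rpow_of_nonneg _ hs.le,
    ENNReal.ofReal, ENNReal.ofReal, Real.toNNReal_of_nonneg ht.le, Real.toNNReal_of_nonneg hs.le]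
  exact_mod_cast this

lemma pl_bdd (t s : ℝ) (ht : 0 < t) (hs : 0 < s) (hts : t + s = 1) (u v w : ℝ → ℝ≥0∞)
    (hu : Measurable u) (hv : Measurable v) (hw : Measurable w)
    (B : ℝ≥0∞) (hB : B ≠ ∞) (huB : ∀ x, u x ≤ B) (hvB : ∀ x, v x ≤ B)
    (H : ∀ x y, (u x) ^ t * (v y) ^ s ≤ w (t * x + s * y)) :
    (∫⁻ x, u x) ^ t * (∫⁻ x, v x) ^ s ≤ ∫⁻ x, w x := by
  set M := ⨆ x, u x with hM
  set N := ⨆ x, v x with hN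
  have huM : ∀ x, u x ≤ M := fun x => le_iSup u x
  have hvN : ∀ x, v x ≤ N := fun x => le_iSup v x
  have hMt : M ≠ ∞ := ne_top_of_le_ne_top hB (iSup_le huB)
  have hNt : N ≠ ∞ := ne_top_of_le_ne_top hB (iSup_le hvB)
  rcases eq_or_ne M 0 with hM0 | hM0
  · have : ∀ x, u x = 0 := fun x => le_antisymm (hM0 ▸ huM x) bot_le
    simp [this, ht]
  rcases eq_or_ne N 0 with hN0 | hN0
  · have : ∀ x, v x = 0 := fun x => le_antisymm (hN0 ▸ hvN x) bot_le
    simp [this, hs]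
  set c := M ^ t * N ^ s with hc
  have hMp : M ^ t ≠ 0 := by simp [hM0, hMt]
  have hNp : N ^ s ≠ 0 := by simp [hN0, hNt]
  have hMp' : M ^ t ≠ ∞ := ENNReal.rpow_ne_top_of_nonneg ht.le hMt
  have hNp' : N ^ s ≠ ∞ := ENNReal.rpow_ne_top_of_nonneg hs.le hNt
  have hc0 : c ≠ 0 := mul_ne_zero hMp hNp
  have hct : c ≠ ∞ := ENNReal.mul_ne_top hMp' hNp'
  have hu1 : ∀ x, u x / M ≤ 1 := fun x => ENNReal.div_le_of_le_mul (by simpa using huM x)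
  have hv1 : ∀ x, v x / N ≤ 1 := fun x => ENNReal.div_le_of_le_mul (by simpa using hvN x)
  have hsplit : ∀ a b : ℝ≥0∞, (a / M) ^ t * (b / N) ^ s = (a ^ t * b ^ s) / c := by
    intro a b
    rw [ENNReal.div_rpow_of_nonneg _ _ ht.le, ENNReal.div_rpow_of_nonneg _ _ hs.le, hc,
      div_eq_mul_inv, div_eq_mul_inv, div_eq_mul_inv, ENNReal.mul_inv (Or.inl hMp) (Or.inl hMp')]
    ring
  have hsup : ∀ (φ : ℝ → ℝ≥0∞) (K : ℝ≥0∞), K = ⨆ x, φ x → K ≠ 0 → K ≠ ∞ → (∀ x, φ x / K ≤ 1) →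
      ∀ r < (1 : ℝ), ∃ x, r < (φ x / K).toReal := by
    intro φ K hK hK0 hKt h1 r hr
    by_contra! hcon
    have : K ≤ ENNReal.ofReal r * K := by
      conv_lhs => rw [hK]
      refine iSup_le fun x => ?_
      rw [← ENNReal.div_le_iff hK0 hKt, ENNReal.le_ofReal_iff_toReal_le
        (ne_top_of_le_ne_top ENNReal.one_ne_top (h1 x)) (ENNReal.toReal_nonneg.trans (hcon x))]
      exact hcon x
    have h2 : ENNReal.ofReal r * K < 1 * K := by
      apply ENNReal.mul_lt_mul_left hK0 hKt
      simpa using hr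
    rw [one_mul] at h2
    exact absurd this (not_le.2 h2)
  have main := pl_real t s ht hs hts (fun x => (u x / M).toReal) (fun x => (v x / N).toReal)
    (fun x => (min (w x / c) 1).toReal) (by fun_prop) (by fun_prop) (by fun_prop)
    (fun _ => ENNReal.toReal_nonneg) (fun _ => ENNReal.toReal_nonneg)
    (fun _ => ENNReal.toReal_nonneg)
    (fun x => ENNReal.toReal_mono ENNReal.one_ne_top (hu1 x))
    (fun x => ENNReal.toReal_mono ENNReal.one_ne_top (hv1 x))
    (hsup u M hM hM0 hMt hu1) (hsup v N hN hN0 hNt hv1) (by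
      intro x y
      rw [ENNReal.toReal_rpow, ENNReal.toReal_rpow, ← ENNReal.toReal_mul]
      refine ENNReal.toReal_mono (by simp) (le_min ?_ ?_)
      · rw [hsplit]
        gcongr
        exact H x y
      · exact mul_le_one' (ENNReal.rpow_le_one (hu1 x) ht.le) (ENNReal.rpow_le_one (hv1 y) hs.le))
  simp_rw [ENNReal.ofReal_toReal (ne_top_of_le_ne_top ENNReal.one_ne_top (hu1 _)),
    ENNReal.ofReal_toReal (ne_top_of_le_ne_top ENNReal.one_ne_top (hv1 _)),
    ENNReal.ofReal_toReal (ne_top_of_le_ne_top ENNReal.one_ne_top (min_le_right (w _ / c) 1))] at main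
  have h3 := (amgm t s ht hs hts _ _).trans (main.trans
    (lintegral_mono fun x => min_le_left (w x / c) 1))
  simp_rw [div_eq_mul_inv] at h3
  rw [lintegral_mul_const _ hu, lintegral_mul_const _ hv, lintegral_mul_const _ hw] at h3
  simp_rw [← div_eq_mul_inv] at h3
  rw [hsplit] at h3
  rwa [ENNReal.div_le_iff hc0 hct, ENNReal.div_mul_cancel hc0 hct] at h3

lemma pl_one (t s : ℝ) (ht : 0 < t) (hs : 0 < s) (hts : t + s = 1) (u v w : ℝ → ℝ≥0∞)
    (hu : Measurable u) (hv : Measurable v) (hw : Measurable w)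
    (H : ∀ x y, (u x) ^ t * (v y) ^ s ≤ w (t * x + s * y)) :
    (∫⁻ x, u x) ^ t * (∫⁻ x, v x) ^ s ≤ ∫⁻ x, w x := by
  rcases eq_or_ne (∫⁻ x, u x) 0 with h0 | h0
  · simp [h0, ht]
  rcases eq_or_ne (∫⁻ x, v x) 0 with h0' | h0'
  · simp [h0', hs]
  have tr : ∀ φ : ℝ → ℝ≥0∞, Measurable φ →
      Filter.Tendsto (fun n : ℕ => ∫⁻ x, min (φ x) n) Filter.atTop (nhds (∫⁻ x, φ x)) := by
    intro φ hφ
    apply lintegral_tendsto_of_tendsto_of_monotone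
    · intro n; fun_prop
    · refine Filter.Eventually.of_forall fun x n m hnm => ?_
      dsimp only
      gcongr
    · refine Filter.Eventually.of_forall fun x => ?_
      have := (tendsto_const_nhds (x := φ x)).min ENNReal.tendsto_nat_nhds_top
      simpa using this
  have lim := ENNReal.Tendsto.mul ((ENNReal.continuous_rpow_const (y := t)).tendsto _ |>.comp (tr u hu))
    (Or.inl (by simp [h0, ht, ht.not_gt])) 
    ((ENNReal.continuous_rpow_const (y := s)).tendsto _ |>.comp (tr v hv))
    (Or.inl (by simp [h0', hs, hs.not_gt])) 
  refine le_of_tendsto' lim fun n => ?_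
  apply pl_bdd t s ht hs hts _ _ w (by fun_prop) (by fun_prop) hw n (by simp) (by simp) (by simp)
  intro x y
  refine le_trans ?_ (H x y)
  gcongr <;> exact min_le_left _ _

lemma pl_pi (t s : ℝ) (ht : 0 < t) (hs : 0 < s) (hts : t + s = 1) (n : ℕ) :
    ∀ (u v w : (Fin n → ℝ) → ℝ≥0∞)
    (_ : Measurable u) (_ : Measurable v) (_ : Measurable w)
    (_ : ∀ x y, (u x) ^ t * (v y) ^ s ≤ w (t • x + s • y)),
    (∫⁻ x, u x) ^ t * (∫⁻ x, v x) ^ s ≤ ∫⁻ x, w x := by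
  induction n with
  | zero =>
    intro u v w hu hv hw H
    have := H 0 0
    simpa [volume_pi, Measure.pi_of_empty (x := (0 : Fin 0 → ℝ)), lintegral_dirac] using this
  | succ n ih =>
    intro u v w hu hv hw H
    have e := (volume_preserving_piFinSuccAbove (fun _ : Fin (n + 1) => ℝ) 0).symm
    set E := (MeasurableEquiv.piFinSuccAbove (fun _ : Fin (n + 1) => ℝ) 0).symm with hE
    have hEm : Measurable E := E.measurable
    have conv : ∀ φ : (Fin (n + 1) → ℝ) → ℝ≥0∞, Measurable φ →
        ∫⁻ x, φ x = ∫⁻ a : ℝ, ∫⁻ b : Fin n → ℝ, φ (E (a, b)) := by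
      intro φ hφ
      rw [← e.lintegral_comp hφ, Measure.volume_eq_prod, lintegral_prod _ (by fun_prop)]
    have hlin : ∀ (a a' : ℝ) (b b' : Fin n → ℝ),
        t • E (a, b) + s • E (a', b') = E (t * a + s * a', t • b + s • b') := by
      intro a a' b b'
      ext i
      refine Fin.cases ?_ (fun j => ?_) i <;>
      simp [hE, MeasurableEquiv.piFinSuccAbove, Fin.insertNthEquiv]
    rw [conv u hu, conv v hv, conv w hw]
    apply pl_one t s ht hs hts
    · exact Measurable.lintegral_prod_right' (f := fun p => u (E p)) (by fun_prop)
    · exact Measurable.lintegral_prod_right' (f := fun p => v (E p)) (by fun_prop)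
    · exact Measurable.lintegral_prod_right' (f := fun p => w (E p)) (by fun_prop)
    · intro a a'
      apply ih _ _ _ (by fun_prop) (by fun_prop) (by fun_prop)
      intro b b'
      rw [← hlin]
      exact H _ _

lemma pl_euc (t s : ℝ) (ht : 0 < t) (hs : 0 < s) (hts : t + s = 1) (n : ℕ)
    (u v w : EuclideanSpace ℝ (Fin n) → ℝ≥0∞)
    (hu : Measurable u) (hv : Measurable v) (hw : Measurable w)
    (H : ∀ x y, (u x) ^ t * (v y) ^ s ≤ w (t • x + s • y)) :
    (∫⁻ x, u x) ^ t * (∫⁻ x, v x) ^ s ≤ ∫⁻ x, w x := by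
  have e := PiLp.volume_preserving_toLp (Fin n)
  rw [← e.lintegral_comp hu, ← e.lintegral_comp hv, ← e.lintegral_comp hw]
  have := e.measurable
  apply pl_pi t s ht hs hts n _ _ _ (by fun_prop) (by fun_prop) (by fun_prop)
  intro x y
  simpa using H (WithLp.toLp 2 x) (WithLp.toLp 2 y)

lemma line_convex {d : ℕ} (α : ℝ)
    (V : EuclideanSpace ℝ (Fin d) → ℝ) (hV : ContDiff ℝ 2 V)
    (hhess : ∀ x v : EuclideanSpace ℝ (Fin d),
      α * ‖v‖ ^ 2 ≤ (iteratedFDeriv ℝ 2 V x) ![v, v]) (x v : EuclideanSpace ℝ (Fin d)) :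
    ConvexOn ℝ Set.univ (fun r : ℝ => V (x + r • v) - α / 2 * ‖v‖ ^ 2 * r ^ 2) ∧
    HasDerivAt (fun r : ℝ => V (x + r • v) - α / 2 * ‖v‖ ^ 2 * r ^ 2) (fderiv ℝ V x v) 0 := by
  have hV1 : Differentiable ℝ V := hV.differentiable (by norm_num)
  have hV2 : Differentiable ℝ (fderiv ℝ V) :=
    (hV.fderiv_right (m := 1) (by norm_num)).differentiable (by norm_num)
  have hl : ∀ r : ℝ, HasDerivAt (fun r : ℝ => x + r • v) v r := by
    intro r
    simpa using ((hasDerivAt_id r).smul_const v).const_add x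
  have hq : ∀ r : ℝ, HasDerivAt (fun r : ℝ => α / 2 * ‖v‖ ^ 2 * r ^ 2) (α * ‖v‖ ^ 2 * r) r := by
    intro r
    have := (hasDerivAt_pow 2 r).const_mul (α / 2 * ‖v‖ ^ 2)
    refine this.congr_deriv ?_
    push_cast; ring
  have h1 : ∀ r : ℝ, HasDerivAt (fun r : ℝ => V (x + r • v) - α / 2 * ‖v‖ ^ 2 * r ^ 2)
      (fderiv ℝ V (x + r • v) v - α * ‖v‖ ^ 2 * r) r := by
    intro r
    exact ((hV1 (x + r • v)).hasFDerivAt.comp_hasDerivAt r (hl r)).sub (hq r)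
  have h2 : ∀ r : ℝ, HasDerivAt (fun r : ℝ => fderiv ℝ V (x + r • v) v - α * ‖v‖ ^ 2 * r)
      (fderiv ℝ (fderiv ℝ V) (x + r • v) v v - α * ‖v‖ ^ 2) r := by
    intro r
    have a0 : HasDerivAt (fun r : ℝ => fderiv ℝ V (x + r • v))
        (fderiv ℝ (fderiv ℝ V) (x + r • v) v) r :=
      (hV2 (x + r • v)).hasFDerivAt.comp_hasDerivAt r (hl r)
    have a : HasDerivAt (fun r : ℝ => fderiv ℝ V (x + r • v) v)
        (fderiv ℝ (fderiv ℝ V) (x + r • v) v v) r :=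
      (ContinuousLinearMap.apply ℝ ℝ v).hasFDerivAt.comp_hasDerivAt r a0
    have b : HasDerivAt (fun r : ℝ => α * ‖v‖ ^ 2 * r) (α * ‖v‖ ^ 2) r := by
      simpa using (hasDerivAt_id r).const_mul (α * ‖v‖ ^ 2)
    exact a.sub b
  have hd : deriv (fun r : ℝ => V (x + r • v) - α / 2 * ‖v‖ ^ 2 * r ^ 2)
      = fun r : ℝ => fderiv ℝ V (x + r • v) v - α * ‖v‖ ^ 2 * r := funext fun r => (h1 r).deriv
  constructor
  · apply convexOn_univ_of_deriv2_nonneg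
    · exact fun r => (h1 r).differentiableAt
    · rw [hd]; exact fun r => (h2 r).differentiableAt
    · intro r
      simp only [Function.iterate_succ, Function.iterate_zero, Function.comp_apply, id]
      rw [hd, (h2 r).deriv]
      have := hhess (x + r • v) v
      rw [iteratedFDeriv_two_apply] at this
      simpa using this
  · simpa using h1 0

lemma strong_cvx {d : ℕ} (α : ℝ)
    (V : EuclideanSpace ℝ (Fin d) → ℝ) (hV : ContDiff ℝ 2 V)
    (hhess : ∀ x v : EuclideanSpace ℝ (Fin d),
      α * ‖v‖ ^ 2 ≤ (iteratedFDeriv ℝ 2 V x) ![v, v]) (x y : EuclideanSpace ℝ (Fin d))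
    (t s : ℝ) (ht : 0 < t) (hs : 0 < s) (hts : t + s = 1) :
    V (t • x + s • y) ≤ t * V x + s * V y - t * s * (α / 2 * ‖x - y‖ ^ 2) := by
  have h := (line_convex α V hV hhess x (y - x)).1.2 (Set.mem_univ 0) (Set.mem_univ 1) ht.le hs.le hts
  obtain rfl : t = 1 - s := by linarith
  have e : x + s • (y - x) = (1 - s) • x + s • y := by module
  simp at h
  rw [e, norm_sub_rev] at h
  nlinarith [h]

lemma growth {d : ℕ} (α : ℝ)
    (V : EuclideanSpace ℝ (Fin d) → ℝ) (hV : ContDiff ℝ 2 V)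
    (hhess : ∀ x v : EuclideanSpace ℝ (Fin d),
      α * ‖v‖ ^ 2 ≤ (iteratedFDeriv ℝ 2 V x) ![v, v]) (x : EuclideanSpace ℝ (Fin d)) :
    V 0 - ‖fderiv ℝ V 0‖ * ‖x‖ + α / 2 * ‖x‖ ^ 2 ≤ V x := by
  obtain ⟨h1, h2⟩ := line_convex α V hV hhess 0 x
  have h := h1.le_slope_of_hasDerivAt (Set.mem_univ 0) (Set.mem_univ 1) zero_lt_one h2
  simp [slope] at h
  have h3 := (fderiv ℝ V 0).le_opNorm x
  rw [Real.norm_eq_abs] at h3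
  have := neg_abs_le (fderiv ℝ V 0 x)
  linarith

lemma integrable_aux {d : ℕ} (α : ℝ) (hα : 0 < α)
    (V : EuclideanSpace ℝ (Fin d) → ℝ) (hV : ContDiff ℝ 2 V)
    (hhess : ∀ x v : EuclideanSpace ℝ (Fin d),
      α * ‖v‖ ^ 2 ≤ (iteratedFDeriv ℝ 2 V x) ![v, v])
    (f : EuclideanSpace ℝ (Fin d) → ℝ) (K : ℝ)
    (hf : ∀ x y, |f x - f y| ≤ K * ‖x - y‖) (hfc : Continuous f) :
    Integrable (fun x => Real.exp (f x - V x)) := by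
  have hVc := hV.continuous
  set G := ‖fderiv ℝ V 0‖
  have hg : Integrable (fun x : EuclideanSpace ℝ (Fin d) => Real.exp (-(α / 4) * ‖x‖ ^ 2)) := by
    have := (GaussianFourier.integrable_cexp_neg_mul_sq_norm_add (b := ((α / 4 : ℝ) : ℂ))
      (by simpa using hα) 0 (0 : EuclideanSpace ℝ (Fin d))).norm
    refine this.congr (Filter.Eventually.of_forall fun x => ?_)
    simp only [Complex.norm_exp]
    congr 1
    rw [zero_mul, add_zero]
    have : -((α / 4 : ℝ) : ℂ) * (‖x‖ : ℂ) ^ 2 = ((-(α / 4) * ‖x‖ ^ 2 : ℝ) : ℂ) := by push_cast; ring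
    rw [this, Complex.ofReal_re]
  refine (hg.const_mul (Real.exp (f 0 - V 0 + (K + G) ^ 2 / α))).mono'
    (by fun_prop) (Filter.Eventually.of_forall fun x => ?_)
  rw [Real.norm_eq_abs, abs_of_pos (Real.exp_pos _), ← Real.exp_add]
  apply Real.exp_le_exp.2
  have h1 := growth α V hV hhess x
  have h2 := (abs_le.1 (hf x 0)).2
  rw [sub_zero] at h2
  have h3 : (K + G) * ‖x‖ ≤ (K + G) ^ 2 / α + α / 4 * ‖x‖ ^ 2 := by
    have : 0 ≤ ((K + G) - α / 2 * ‖x‖) ^ 2 / α := by positivity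
    have e : ((K + G) - α / 2 * ‖x‖) ^ 2 / α = (K + G) ^ 2 / α + α / 4 * ‖x‖ ^ 2 - (K + G) * ‖x‖ := by
      field_simp; ring
    linarith
  nlinarith

lemma pl_step {d : ℕ} (α : ℝ) (hα : 0 < α)
    (V : EuclideanSpace ℝ (Fin d) → ℝ) (hV : ContDiff ℝ 2 V)
    (hhess : ∀ x v : EuclideanSpace ℝ (Fin d),
      α * ‖v‖ ^ 2 ≤ (iteratedFDeriv ℝ 2 V x) ![v, v])
    (f : EuclideanSpace ℝ (Fin d) → ℝ) (K : ℝ)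
    (hf : ∀ x y, |f x - f y| ≤ K * ‖x - y‖) (hfc : Continuous f)
    (t s : ℝ) (ht : 0 < t) (hs : 0 < s) (hts : t + s = 1) :
    (∫ x, Real.exp (f x - V x)) ^ t * (∫ x, Real.exp (- V x)) ^ s ≤
      Real.exp (t * s * (K ^ 2 / (2 * α))) * ∫ x, Real.exp (t * f x - V x) := by
  have hVc := hV.continuous
  have i1 := integrable_aux α hα V hV hhess f K hf hfc
  have i2 : Integrable (fun x => Real.exp (- V x)) := by
    have := integrable_aux α hα V hV hhess (fun _ => 0) 0 (by simp) (by fun_prop)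
    simpa using this
  have i3 := integrable_aux α hα V hV hhess (fun x => t * f x) (t * K) (by
    intro x y
    rw [← mul_sub, abs_mul, abs_of_pos ht, mul_assoc]
    exact mul_le_mul_of_nonneg_left (hf x y) ht.le) (by fun_prop)
  have h := pl_euc t s ht hs hts d (fun x => ENNReal.ofReal (Real.exp (f x - V x)))
    (fun x => ENNReal.ofReal (Real.exp (- V x)))
    (fun x => ENNReal.ofReal (Real.exp (t * s * (K ^ 2 / (2 * α))) * Real.exp (t * f x - V x)))
    (by fun_prop) (by fun_prop) (by fun_prop) (by
      intro x y
      rw [ENNReal.ofReal_rpow_of_pos (Real.exp_pos _), ENNReal.ofReal_rpow_of_pos (Real.exp_pos _),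
        ← ENNReal.ofReal_mul (by positivity), ← Real.exp_mul, ← Real.exp_mul, ← Real.exp_add,
        ← Real.exp_add]
      apply ENNReal.ofReal_le_ofReal
      apply Real.exp_le_exp.2
      have h1 := strong_cvx α V hV hhess x y t s ht hs hts
      have h2 := (abs_le.1 (hf x (t • x + s • y))).2
      have e : x - (t • x + s • y) = s • (x - y) := by
        obtain rfl : t = 1 - s := by linarith
        module
      rw [e, norm_smul, Real.norm_eq_abs, abs_of_pos hs] at h2
      have h3 : K * ‖x - y‖ ≤ K ^ 2 / (2 * α) + α / 2 * ‖x - y‖ ^ 2 := by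
        have : 0 ≤ (K - α * ‖x - y‖) ^ 2 / (2 * α) := by positivity
        have e : (K - α * ‖x - y‖) ^ 2 / (2 * α)
            = K ^ 2 / (2 * α) + α / 2 * ‖x - y‖ ^ 2 - K * ‖x - y‖ := by
          field_simp; ring
        linarith
      have h4 := mul_le_mul_of_nonneg_left h2 ht.le
      have h5 := mul_le_mul_of_nonneg_left h3 (mul_pos ht hs).le
      linarith)
  rw [← ofReal_integral_eq_lintegral_ofReal i1 (Filter.Eventually.of_forall fun x => (Real.exp_pos _).le),
    ← ofReal_integral_eq_lintegral_ofReal i2 (Filter.Eventually.of_forall fun x => (Real.exp_pos _).le),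
    ← ofReal_integral_eq_lintegral_ofReal (i3.const_mul _)
      (Filter.Eventually.of_forall fun x => (by positivity)),
    ENNReal.ofReal_rpow_of_nonneg (integral_nonneg fun x => (Real.exp_pos _).le) ht.le,
    ENNReal.ofReal_rpow_of_nonneg (integral_nonneg fun x => (Real.exp_pos _).le) hs.le,
    ← ENNReal.ofReal_mul (Real.rpow_nonneg (integral_nonneg fun x => (Real.exp_pos _).le) _),
    integral_const_mul,
    ENNReal.ofReal_le_ofReal_iff (mul_nonneg (Real.exp_pos _).le
      (integral_nonneg fun x => (Real.exp_pos _).le))] at h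
  exact h

lemma cosh_bound (x : ℝ) : 1 + x ^ 2 / 2 ≤ Real.cosh x := by
  have h1 : Real.cosh x = 1 + 2 * Real.sinh (x / 2) ^ 2 := by
    have := Real.cosh_two_mul (x / 2)
    rw [mul_div_cancel₀ _ (two_ne_zero), Real.cosh_sq] at this
    linarith
  have h2 : (x / 2) ^ 2 ≤ Real.sinh (x / 2) ^ 2 := by
    rw [sq_le_sq, Real.abs_sinh]
    exact Real.self_le_sinh_iff.2 (abs_nonneg _)
  rw [h1]; linarith

lemma second_moment {Ω : Type*} [MeasurableSpace Ω] (P : Measure Ω) [IsProbabilityMeasure P]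
    (Y : Ω → ℝ) (c : NNReal) (hY : ProbabilityTheory.HasSubgaussianMGF Y c P) :
    ∫ x, Y x ^ 2 ∂P ≤ c := by
  have hi : Integrable (fun x => Y x ^ 2) P := (hY.memLp 2).integrable_sq
  have key : ∀ h : ℝ, 0 < h → (∫ x, Y x ^ 2 ∂P) * h ≤ Real.exp (c * h) - 1 := by
    intro h hh
    set l := √(2 * h) with hl
    have hl2 : l ^ 2 = 2 * h := Real.sq_sqrt (by positivity)
    have a1 := hY.mgf_le l
    have a2 := hY.mgf_le (-l)
    rw [neg_sq] at a2
    have e : (c : ℝ) * l ^ 2 / 2 = c * h := by rw [hl2]; ring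
    rw [e] at a1 a2
    unfold ProbabilityTheory.mgf at a1 a2
    have a3 : ∫ x, (2 + 2 * h * Y x ^ 2) ∂P
        ≤ ∫ x, (Real.exp (l * Y x) + Real.exp (-l * Y x)) ∂P := by
      apply integral_mono
      · exact (integrable_const _).add (hi.const_mul _)
      · exact (hY.integrable_exp_mul l).add (hY.integrable_exp_mul (-l))
      · intro x
        have := cosh_bound (l * Y x)
        rw [Real.cosh_eq, mul_pow, hl2] at this
        simp only [neg_mul]
        linarith
    rw [integral_add (integrable_const _) (hi.const_mul _), integral_const_mul,
      integral_add (hY.integrable_exp_mul l) (hY.integrable_exp_mul (-l))] at a3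
    simp at a3
    simp only [neg_mul] at a2
    linarith
  apply le_of_forall_pos_le_add
  intro ε hε
  set h := min (1 / (c + 1 : ℝ)) (ε / (c ^ 2 + 1)) with hh
  have hpos : 0 < h := by positivity
  have b1 : c * h ≤ 1 := by
    have : h ≤ 1 / (c + 1 : ℝ) := min_le_left _ _
    rw [le_div_iff₀ (by positivity)] at this
    nlinarith
  have b2 : (c : ℝ) ^ 2 * h ≤ ε := by
    have : h ≤ ε / (c ^ 2 + 1 : ℝ) := min_le_right _ _
    rw [le_div_iff₀ (by positivity)] at this
    nlinarith
  have b3 := (abs_le.1 (Real.abs_exp_sub_one_sub_id_le (x := c * h)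
    (by rw [abs_of_nonneg (by positivity)]; exact b1))).2
  have b4 := key h hpos
  refine le_of_mul_le_mul_right ?_ hpos
  nlinarith

lemma subgauss {d : ℕ} (α : ℝ) (hα : 0 < α)
    (V : EuclideanSpace ℝ (Fin d) → ℝ) (hV : ContDiff ℝ 2 V)
    (hhess : ∀ x v : EuclideanSpace ℝ (Fin d),
      α * ‖v‖ ^ 2 ≤ (iteratedFDeriv ℝ 2 V x) ![v, v])
    (P : Measure (EuclideanSpace ℝ (Fin d)))
    (hP : P = volume.withDensity fun x =>
      ENNReal.ofReal (Real.exp (-V x) / ∫ y, Real.exp (-V y))) :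
    IsProbabilityMeasure P ∧ ∀ f : EuclideanSpace ℝ (Fin d) → ℝ,
      Continuous f → (∀ x y, |f x - f y| ≤ ‖x - y‖) →
      ProbabilityTheory.HasSubgaussianMGF (fun x => f x - ∫ y, f y ∂P) (α⁻¹).toNNReal P := by
  have hVc := hV.continuous
  have i2 : Integrable (fun x => Real.exp (- V x)) := by
    have := integrable_aux α hα V hV hhess (fun _ => 0) 0 (by simp) (by fun_prop)
    simpa using this
  set Z := ∫ y, Real.exp (-V y) with hZ
  have hZ0 : 0 < Z := integral_exp_pos i2
  have hm : Measurable fun x => ENNReal.ofReal (Real.exp (-V x) / Z) := by fun_prop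
  have hprob : IsProbabilityMeasure P := by
    constructor
    rw [hP, withDensity_apply _ MeasurableSet.univ, setLIntegral_univ,
      ← ofReal_integral_eq_lintegral_ofReal (i2.div_const Z)
        (Filter.Eventually.of_forall fun x => by positivity), integral_div, div_self hZ0.ne']
    simp
  have hdens : ∀ (f : EuclideanSpace ℝ (Fin d) → ℝ) x,
      (ENNReal.ofReal (Real.exp (-V x) / Z)).toReal • Real.exp (f x)
        = Z⁻¹ * Real.exp (f x - V x) := by
    intro f x
    rw [ENNReal.toReal_ofReal (by positivity), sub_eq_add_neg, Real.exp_add, smul_eq_mul]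
    ring
  have hint : ∀ f : EuclideanSpace ℝ (Fin d) → ℝ, ∫ x, Real.exp (f x) ∂P
      = Z⁻¹ * ∫ x, Real.exp (f x - V x) := by
    intro f
    rw [hP, integral_withDensity_eq_integral_toReal_smul hm (by simp)]
    simp_rw [hdens]
    rw [integral_const_mul]
  have hIf : ∀ (f : EuclideanSpace ℝ (Fin d) → ℝ) (K : ℝ), Continuous f →
      (∀ x y, |f x - f y| ≤ K * ‖x - y‖) → Integrable (fun x => Real.exp (f x)) P := by
    intro f K hfc hf
    rw [hP, integrable_withDensity_iff_integrable_smul' hm (by simp)]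
    simp_rw [hdens]
    exact (integrable_aux α hα V hV hhess f K hf hfc).const_mul _
  refine ⟨hprob, ?_⟩
  -- the bound on the exponential moment
  have main : ∀ (f : EuclideanSpace ℝ (Fin d) → ℝ) (K : ℝ), Continuous f →
      (∀ x y, |f x - f y| ≤ K * ‖x - y‖) →
      ProbabilityTheory.cgf f P 1 ≤ (∫ x, f x ∂P) + K ^ 2 / (2 * α) := by
    intro f K hfc hf
    have hsc : ∀ t x y, |t * f x - t * f y| ≤ (|t| * K) * ‖x - y‖ := by
      intro t x y
      rw [← mul_sub, abs_mul, mul_assoc]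
      exact mul_le_mul_of_nonneg_left (hf x y) (abs_nonneg t)
    have hset : ProbabilityTheory.integrableExpSet f P = Set.univ := by
      ext t
      simp only [Set.mem_univ, iff_true]
      exact hIf (fun x => t * f x) _ (by fun_prop) (hsc t)
    have h0 : (0 : ℝ) ∈ interior (ProbabilityTheory.integrableExpSet f P) := by simp [hset]
    have hder := (ProbabilityTheory.analyticAt_cgf h0).differentiableAt.hasDerivAt
    rw [ProbabilityTheory.deriv_cgf_zero h0] at hder
    have hlim := hder.tendsto_slope.mono_left (nhdsWithin_mono (0 : ℝ)
      (fun t (ht : t ∈ Set.Ioi (0 : ℝ)) => (ne_of_gt ht : t ∈ ({0}ᶜ : Set ℝ))))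
    have hlim2 : Filter.Tendsto (fun t : ℝ => slope (ProbabilityTheory.cgf f P) 0 t
        + (1 - t) * (K ^ 2 / (2 * α))) (nhdsWithin 0 (Set.Ioi 0))
        (nhds ((∫ x, f x ∂P) + K ^ 2 / (2 * α))) := by
      have h2 : Filter.Tendsto (fun t : ℝ => (1 - t) * (K ^ 2 / (2 * α)))
          (nhdsWithin 0 (Set.Ioi 0)) (nhds ((1 - 0) * (K ^ 2 / (2 * α)))) :=
        ((by fun_prop : Continuous fun t : ℝ => (1 - t) * (K ^ 2 / (2 * α))).tendsto 0).mono_left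
          nhdsWithin_le_nhds
      simpa using hlim.add h2
    refine ge_of_tendsto hlim2 ?_
    filter_upwards [Ioo_mem_nhdsGT (zero_lt_one (α := ℝ))] with t ht
    have hA : ∀ t, 0 < ∫ x, Real.exp (t * f x - V x) := fun t =>
      integral_exp_pos (integrable_aux α hα V hV hhess (fun x => t * f x) _ (hsc t) (by fun_prop))
    have hA1 : 0 < ∫ x, Real.exp (f x - V x) := by simpa using hA 1
    have hstep := pl_step α hα V hV hhess f K hf hfc t (1 - t) ht.1 (by linarith [ht.2]) (by ring)
    rw [← hZ] at hstep
    have hlog := Real.log_le_log (by positivity) hstep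
    rw [Real.log_mul (by positivity) (by positivity), Real.log_rpow hA1, Real.log_rpow hZ0,
      Real.log_mul (by positivity) (hA t).ne', Real.log_exp] at hlog
    have hc1 : ProbabilityTheory.cgf f P 1 = Real.log (∫ x, Real.exp (f x - V x)) - Real.log Z := by
      unfold ProbabilityTheory.cgf ProbabilityTheory.mgf
      simp_rw [one_mul]
      rw [hint, Real.log_mul (by positivity) hA1.ne', Real.log_inv]; ring
    have hct : ProbabilityTheory.cgf f P t
        = Real.log (∫ x, Real.exp (t * f x - V x)) - Real.log Z := by
      unfold ProbabilityTheory.cgf ProbabilityTheory.mgf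
      rw [hint (fun x => t * f x), Real.log_mul (by positivity) (hA t).ne', Real.log_inv]; ring
    rw [slope_def_field, ProbabilityTheory.cgf_zero, sub_zero, sub_zero, hct, hc1]
    have ht0 := ht.1
    rw [← sub_le_iff_le_add, le_div_iff₀ ht0]
    linarith
  intro f hfc hf
  have hsc : ∀ t x y, |t * f x - t * f y| ≤ |t| * ‖x - y‖ := by
    intro t x y
    rw [← mul_sub, abs_mul]
    exact mul_le_mul_of_nonneg_left (hf x y) (abs_nonneg t)
  have hexp : ∀ t x, Real.exp (t * (f x - ∫ y, f y ∂P))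
      = Real.exp (-(t * ∫ y, f y ∂P)) * Real.exp (t * f x) := by
    intro t x
    rw [← Real.exp_add]; ring_nf
  constructor
  · intro t
    simp_rw [hexp]
    exact (hIf (fun x => t * f x) _ (by fun_prop) (hsc t)).const_mul _
  · intro t
    have h := main (fun x => t * f x) |t| (by fun_prop) (hsc t)
    unfold ProbabilityTheory.cgf ProbabilityTheory.mgf at h
    simp_rw [one_mul] at h
    rw [integral_const_mul, sq_abs] at h
    unfold ProbabilityTheory.mgf
    simp_rw [hexp]
    have hpos := integral_exp_pos (hIf (fun x => t * f x) _ (by fun_prop) (hsc t))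
    rw [integral_const_mul, ← Real.exp_log hpos, ← Real.exp_add,
      Real.coe_toNNReal _ (by positivity)]
    apply Real.exp_le_exp.2
    have : α⁻¹ * t ^ 2 / 2 = t ^ 2 / (2 * α) := by field_simp
    linarith

/-- Norm concentration for an `α`-strongly log-concave random vector:
if `X` has density `∝ exp(−V)` with `∇²V ⪰ α I_d` everywhere and mean `μ`, then for
`δ ∈ (0,1)`, `P[‖X − μ‖ ≤ √(d/α) + √(2 ln(1/δ)/α)] ≥ 1 − δ`. -/
theorem strongly_logconcave_norm_concentration (d : ℕ) (α : ℝ) (hα : 0 < α)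
    (V : EuclideanSpace ℝ (Fin d) → ℝ) (hV : ContDiff ℝ 2 V)
    (hhess : ∀ x v : EuclideanSpace ℝ (Fin d),
      α * ‖v‖ ^ 2 ≤ (iteratedFDeriv ℝ 2 V x) ![v, v])
    (π' : Measure (EuclideanSpace ℝ (Fin d)))
    (hπ' : π' = volume.withDensity fun x =>
      ENNReal.ofReal (Real.exp (-V x) / ∫ y, Real.exp (-V y)))
    (μ : EuclideanSpace ℝ (Fin d)) (hμ : μ = ∫ x, x ∂π')
    (δ : ℝ) (hδ : δ ∈ Set.Ioo (0 : ℝ) 1) :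
    ENNReal.ofReal (1 - δ) ≤
      π' {x | ‖x - μ‖ ≤ Real.sqrt (d / α) + Real.sqrt (2 * Real.log (1 / δ) / α)} := by
  obtain ⟨hprob, hsub⟩ := subgauss α hα V hV hhess π' hπ'
  have hc : (((α⁻¹).toNNReal : NNReal) : ℝ) = α⁻¹ := Real.coe_toNNReal _ (by positivity)
  -- integrability of the identity
  have hid : Integrable (fun x : EuclideanSpace ℝ (Fin d) => x) π' := by
    have h := (hsub (fun x => ‖x‖) continuous_norm (fun x y => abs_norm_sub_norm_le x y)).integrable
    have h2 := h.add (integrable_const (∫ y, ‖y‖ ∂π'))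
    refine (integrable_norm_iff (by fun_prop)).1 (h2.congr (Filter.Eventually.of_forall fun x => ?_))
    simp
  have hcoord : ∀ i, ∫ x, x i ∂π' = μ i := by
    intro i
    rw [hμ]
    exact (EuclideanSpace.proj (𝕜 := ℝ) i).integral_comp_comm hid
  have hsubc : ∀ i, ProbabilityTheory.HasSubgaussianMGF
      (fun x : EuclideanSpace ℝ (Fin d) => x i - μ i) (α⁻¹).toNNReal π' := by
    intro i
    have h := hsub (fun x => x i) (by fun_prop) (fun x y => by
      simpa using PiLp.norm_apply_le (x - y) i)
    rwa [hcoord] at h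
  -- the second moment
  have hsq : ∫ x, ‖x - μ‖ ^ 2 ∂π' ≤ d / α := by
    have e : ∀ x : EuclideanSpace ℝ (Fin d), ‖x - μ‖ ^ 2 = ∑ i, (x i - μ i) ^ 2 := by
      intro x
      rw [EuclideanSpace.real_norm_sq_eq]
      simp
    simp_rw [e]
    rw [integral_finsetSum _ (fun i _ => ((hsubc i).memLp 2).integrable_sq)]
    calc ∑ i, ∫ x, (x i - μ i) ^ 2 ∂π' ≤ ∑ i : Fin d, α⁻¹ :=
          Finset.sum_le_sum fun i _ => (second_moment π' _ _ (hsubc i)).trans hc.le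
      _ = d / α := by simp [div_eq_mul_inv]
  have hg := hsub (fun x => ‖x - μ‖) (by fun_prop) (fun x y => by
    simpa using abs_norm_sub_norm_le (x - μ) (y - μ))
  have hgL : MemLp (fun x => ‖x - μ‖) 2 π' := by
    have := (hg.memLp 2).add (memLp_const (∫ y, ‖y - μ‖ ∂π'))
    refine this.ae_eq (Filter.Eventually.of_forall fun x => ?_)
    simp
  have hmean : ∫ x, ‖x - μ‖ ∂π' ≤ √(d / α) := by
    apply Real.le_sqrt_of_sq_le
    have h1 := ProbabilityTheory.variance_eq_sub hgL
    have h2 := ProbabilityTheory.variance_nonneg (fun x => ‖x - μ‖) π'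
    rw [h1] at h2
    simp only [Pi.pow_apply] at h2
    linarith
  set r := √(2 * Real.log (1 / δ) / α) with hr
  have hlog : 0 ≤ Real.log (1 / δ) := Real.log_nonneg (by
    rw [le_div_iff₀ hδ.1]; linarith [hδ.2])
  have hr2 : r ^ 2 = 2 * Real.log (1 / δ) / α := Real.sq_sqrt (by positivity)
  have htail := hg.measure_ge_le (ε := r) (Real.sqrt_nonneg _)
  have hex : Real.exp (-r ^ 2 / (2 * (((α⁻¹).toNNReal : NNReal) : ℝ))) = δ := by
    rw [hc, hr2]
    have : -(2 * Real.log (1 / δ) / α) / (2 * α⁻¹) = Real.log δ := by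
      rw [one_div, Real.log_inv]; field_simp
    rw [this, Real.exp_log hδ.1]
  rw [hex] at htail
  have hmS : MeasurableSet {x : EuclideanSpace ℝ (Fin d) | ‖x - μ‖ ≤ √(d / α) + r} :=
    measurableSet_le (by fun_prop) (by fun_prop)
  have hcomp : π'.real {x | ‖x - μ‖ ≤ √(d / α) + r}ᶜ ≤ δ := by
    refine le_trans (measureReal_mono ?_) htail
    intro x hx
    simp only [Set.mem_compl_iff, Set.mem_ofPred_eq, not_le] at hx ⊢
    linarith
  rw [probReal_compl_eq_one_sub hmS] at hcomp
  rw [ENNReal.ofReal_le_iff_le_toReal (measure_ne_top _ _)]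
  change 1 - δ ≤ π'.real _
  linarith
end

section
/- Let p be a probability distribution on ℝ^d with finite second moment, and set m₂² := E_{x∼p}‖x − E_{x∼p}[x]‖². Let x ~ p, let A ∈ ℝ^{m×d}, η₁ > 0, and y₁ = Ax + ξ with ξ ~ N(0, η₁² I_m) independent of x. Then E_{y₁}[ TV( law of x conditioned on y₁, p ) ] ≤ ‖A‖·m₂ / (2η₁), where ‖A‖ is the operator norm of A. -/
open MeasureTheory ProbabilityTheory

/-- Total variation distance between two measures: supremum over measurable sets of the
absolute difference of their masses. -/
noncomputable def tvDist {α : Type*} [MeasurableSpace α] (μ ν : Measure α) : ℝ :=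
  ⨆ S : {S : Set α // MeasurableSet S}, |(μ S.1).toReal - (ν S.1).toReal|

/-- The density of the isotropic Gaussian `N(0, σ² I_m)` on `ℝ^m`. -/
noncomputable def gaussDensity (m : ℕ) (σ2 : ℝ) (x : EuclideanSpace ℝ (Fin m)) : ℝ :=
  (2 * Real.pi * σ2) ^ (-(m : ℝ) / 2) * Real.exp (-‖x‖ ^ 2 / (2 * σ2))

/-- The isotropic Gaussian measure `N(0, σ² I_m)` on `ℝ^m`. -/
noncomputable def gaussMeasure (m : ℕ) (σ2 : ℝ) : Measure (EuclideanSpace ℝ (Fin m)) :=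
  volume.withDensity fun x => ENNReal.ofReal (gaussDensity m σ2 x)


lemma aux_log_ge {t : ℝ} (ht : 0 < t) :
    (t - 1) * (5 * t + 1) / (t * (2 * t + 4)) ≤ Real.log t := by
  set k : ℝ → ℝ := fun t => Real.log t - (t - 1) * (5 * t + 1) / (t * (2 * t + 4)) with hk
  have hd : ∀ s : ℝ, 0 < s → HasDerivAt k ((s - 1) ^ 3 / (s ^ 2 * (s + 2) ^ 2)) s := by
    intro s hs
    have h1 : HasDerivAt (fun t : ℝ => (t - 1) * (5 * t + 1)) (10 * s - 4) s := by
      have := ((hasDerivAt_id s).sub_const 1).mul (((hasDerivAt_id s).const_mul 5).add_const 1)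
      refine this.congr_deriv ?_
      simp; ring
    have h2 : HasDerivAt (fun t : ℝ => t * (2 * t + 4)) (4 * s + 4) s := by
      have := (hasDerivAt_id s).mul (((hasDerivAt_id s).const_mul 2).add_const 4)
      refine this.congr_deriv ?_
      simp; ring
    have h3 := (Real.hasDerivAt_log hs.ne').sub (h1.div h2 (by positivity))
    refine h3.congr_deriv ?_
    have : s * (2 * s + 4) ≠ 0 := by positivity
    have : s + 2 ≠ 0 := by positivity
    have e : (s * (2 * s + 4)) ^ 2 = 4 * (s ^ 2 * (s + 2) ^ 2) := by ring
    rw [e]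
    field_simp
    ring
  have hk1 : k 1 = 0 := by simp [hk]
  have hc : ∀ s : ℝ, 0 < s → ContinuousAt k s := fun s hs => (hd s hs).continuousAt
  suffices h : 0 ≤ k t by simpa [hk, sub_nonneg] using h
  rw [← hk1]
  rcases le_total 1 t with h | h
  · have : MonotoneOn k (Set.Ici 1) := by
      apply monotoneOn_of_deriv_nonneg (convex_Ici 1)
      · intro s hs
        exact (hc s (lt_of_lt_of_le one_pos hs)).continuousWithinAt
      · intro s hs
        rw [interior_Ici] at hs
        exact (hd s (one_pos.trans hs)).differentiableAt.differentiableWithinAt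
      · intro s hs
        rw [interior_Ici] at hs
        rw [(hd s (one_pos.trans hs)).deriv]
        have : 0 ≤ s - 1 := sub_nonneg.2 (le_of_lt hs)
        positivity
    exact this (Set.mem_Ici.2 le_rfl) h h
  · have : AntitoneOn k (Set.Ioc 0 1) := by
      apply antitoneOn_of_deriv_nonpos (convex_Ioc 0 1)
      · intro s hs
        exact (hc s hs.1).continuousWithinAt
      · intro s hs
        rw [interior_Ioc] at hs
        exact (hd s hs.1).differentiableAt.differentiableWithinAt
      · intro s hs
        rw [interior_Ioc] at hs
        rw [(hd s hs.1).deriv]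
        apply div_nonpos_of_nonpos_of_nonneg _ (by positivity)
        have : s - 1 ≤ 0 := by linarith [hs.2]
        exact Odd.pow_nonpos (by decide) this
    exact this ⟨ht, h⟩ ⟨one_pos, le_rfl⟩ h

/-- The pointwise relative entropy integrand. -/
noncomputable def entD (a b : ℝ) : ℝ := a * (Real.log a - Real.log b) - a + b

lemma entD_lower {a b : ℝ} (ha : 0 < a) (hb : 0 < b) :
    3 * (a - b) ^ 2 ≤ (2 * a + 4 * b) * entD a b := by
  have h := aux_log_ge (div_pos ha hb)
  rw [Real.log_div ha.ne' hb.ne'] at h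
  have e : (a / b - 1) * (5 * (a / b) + 1) / (a / b * (2 * (a / b) + 4))
      = (a - b) * (5 * a + b) / (a * (2 * a + 4 * b)) := by
    field_simp
  rw [e, div_le_iff₀ (by positivity)] at h
  unfold entD
  nlinarith

lemma entD_nonneg {a b : ℝ} (ha : 0 < a) (hb : 0 < b) : 0 ≤ entD a b := by
  have := entD_lower ha hb
  by_contra hneg
  push Not at hneg
  have : (2 * a + 4 * b) * entD a b < 0 := mul_neg_of_pos_of_neg (by positivity) hneg
  nlinarith [sq_nonneg (a - b)]

lemma entD_pinsker {a b l : ℝ} (ha : 0 < a) (hb : 0 < b) (hl : 0 < l) :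
    |a - b| ≤ l * ((a + 2 * b) / 3) + entD a b / (2 * l) := by
  have h := entD_lower ha hb
  have h0 := entD_nonneg ha hb
  apply abs_le_of_sq_le_sq _ (by positivity)
  set u := l * ((a + 2 * b) / 3)
  set v := entD a b / (2 * l)
  have huv : 4 * (u * v) = (2 * a + 4 * b) * entD a b / 3 := by
    simp only [u, v]; field_simp; ring
  nlinarith [sq_nonneg (u - v)]

lemma entD_chain (a b c : ℝ) :
    entD a b + entD b c = entD a c + (b - a) * (Real.log b - Real.log c) := by
  unfold entD; ring

lemma integrable_of_range {X : Type*} [MeasurableSpace X] (P : Measure X) [IsProbabilityMeasure P]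
    {f : X → ℝ} (hf : Measurable f) {C : ℝ} (h0 : ∀ x, 0 < f x) (hC : ∀ x, f x ≤ C)
    {F : ℝ → ℝ} (hF : Continuous F) : Integrable (fun x => F (f x)) P := by
  obtain ⟨B, hB⟩ := (isCompact_Icc (a := (0 : ℝ)) (b := C)).exists_bound_of_continuousOn
    hF.continuousOn
  exact Integrable.of_bound (hF.measurable.comp hf).aestronglyMeasurable B
    (Filter.Eventually.of_forall fun x => hB _ ⟨(h0 x).le, hC x⟩)

lemma entD_continuous (b : ℝ) : Continuous fun a => entD a b := by
  have : (fun a => entD a b) = fun a => a * Real.log a - a * Real.log b - a + b := by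
    ext a; unfold entD; ring
  rw [this]
  have := Real.continuous_mul_log
  fun_prop

lemma pt_bound {X : Type*} [MeasurableSpace X] (P : Measure X) [IsProbabilityMeasure P]
    {f : X → ℝ} (hf : Measurable f) {C : ℝ} (h0 : ∀ x, 0 < f x) (hC : ∀ x, f x ≤ C)
    {q g l : ℝ} (hq : q = ∫ x, f x ∂P) (hq0 : 0 < q) (hg : 0 < g) (hl : 0 < l) :
    ∫ x, |f x - q| ∂P ≤ l * q + (∫ x, entD (f x) g ∂P) / (2 * l) := by
  have I {F : ℝ → ℝ} (hF : Continuous F) := integrable_of_range P hf h0 hC hF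
  have i1 := I (entD_continuous q)
  have i2 := I (entD_continuous g)
  have i0 := I continuous_id
  simp only [id] at i0
  have key : (∫ x, entD (f x) q ∂P) + entD q g = ∫ x, entD (f x) g ∂P := by
    have e : ∀ x, entD (f x) q = entD (f x) g + ((q - f x) * (Real.log q - Real.log g) - entD q g) := by
      intro x; linarith [entD_chain (f x) q g]
    simp_rw [e]
    have i3 : Integrable (fun x => (q - f x) * (Real.log q - Real.log g)) P :=
      ((integrable_const q).sub i0).mul_const _
    have i4 : Integrable (fun x => (q - f x) * (Real.log q - Real.log g) - entD q g) P :=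
      i3.sub (integrable_const _)
    rw [integral_add i2 i4, integral_sub i3 (integrable_const _),
      integral_mul_const, integral_sub (integrable_const _) i0, ← hq]
    simp
  have hD := entD_nonneg hq0 hg
  calc ∫ x, |f x - q| ∂P ≤ ∫ x, (l * ((f x + 2 * q) / 3) + entD (f x) q / (2 * l)) ∂P := by
        apply integral_mono
        · exact (i0.sub (integrable_const q)).abs
        · exact (((i0.add (integrable_const _)).div_const 3).const_mul l).add (i1.div_const _)
        · intro x; exact entD_pinsker (h0 x) hq0 hl
    _ = l * q + (∫ x, entD (f x) q ∂P) / (2 * l) := by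
        have i5 : Integrable (fun x => l * ((f x + 2 * q) / 3)) P :=
          ((i0.add (integrable_const _)).div_const 3).const_mul l
        rw [integral_add i5 (i1.div_const _),
          integral_const_mul, integral_div, integral_div, integral_add i0 (integrable_const _), ← hq,
          integral_const, probReal_univ, one_smul]
        ring
    _ ≤ _ := by
        have : (∫ x, entD (f x) q ∂P) ≤ ∫ x, entD (f x) g ∂P := by linarith
        have := div_le_div_of_nonneg_right this (by positivity : 0 ≤ 2 * l)
        linarith

lemma tv_bound {X : Type*} [MeasurableSpace X] (P : Measure X) [IsProbabilityMeasure P]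
    {r : X → ℝ} (h0 : ∀ x, 0 ≤ r x) (hi : Integrable r P) (h1 : ∫ x, r x ∂P = 1) :
    tvDist (P.withDensity fun x => ENNReal.ofReal (r x)) P ≤ (∫ x, |r x - 1| ∂P) / 2 := by
  unfold tvDist
  have : Nonempty {S : Set X // MeasurableSet S} := ⟨⟨∅, MeasurableSet.empty⟩⟩
  apply ciSup_le
  rintro ⟨S, hS⟩
  have j : Integrable (fun x => r x - 1) P := hi.sub (integrable_const _)
  have e : (P.withDensity (fun x => ENNReal.ofReal (r x)) S).toReal - (P S).toReal
      = ∫ x in S, (r x - 1) ∂P := by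
    rw [withDensity_apply _ hS, integral_sub hi.integrableOn (integrable_const _),
      integral_eq_lintegral_of_nonneg_ae (Filter.Eventually.of_forall h0)
        hi.integrableOn.aestronglyMeasurable]
    simp [Measure.real]
  simp only [e]
  have hz : (∫ x in S, (r x - 1) ∂P) + ∫ x in Sᶜ, (r x - 1) ∂P = 0 := by
    rw [integral_add_compl hS j, integral_sub hi (integrable_const _), h1]; simp
  have ha : (∫ x in S, |r x - 1| ∂P) + ∫ x in Sᶜ, |r x - 1| ∂P = ∫ x, |r x - 1| ∂P :=
    integral_add_compl hS j.abs
  have b1 := abs_integral_le_integral_abs (μ := P.restrict S) (f := fun x => r x - 1)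
  have b2 := abs_integral_le_integral_abs (μ := P.restrict Sᶜ) (f := fun x => r x - 1)
  have : ∫ x in Sᶜ, (r x - 1) ∂P = -∫ x in S, (r x - 1) ∂P := by linarith
  rw [this, abs_neg] at b2
  linarith

lemma tv_nonneg {X : Type*} [MeasurableSpace X] (μ ν : Measure X) : 0 ≤ tvDist μ ν :=
  Real.iSup_nonneg fun _ => abs_nonneg _

lemma gd_pos (m : ℕ) {s : ℝ} (hs : 0 < s) (z : EuclideanSpace ℝ (Fin m)) :
    0 < gaussDensity m s z := by
  unfold gaussDensity; positivity

lemma gd_le (m : ℕ) {s : ℝ} (hs : 0 < s) (z : EuclideanSpace ℝ (Fin m)) :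
    gaussDensity m s z ≤ (2 * Real.pi * s) ^ (-(m : ℝ) / 2) := by
  unfold gaussDensity
  apply mul_le_of_le_one_right (by positivity)
  rw [Real.exp_le_one_iff]
  apply div_nonpos_of_nonpos_of_nonneg _ (by positivity)
  nlinarith [sq_nonneg ‖z‖]

lemma gd_cont (m : ℕ) (s : ℝ) : Continuous (gaussDensity m s) := by
  unfold gaussDensity; fun_prop

lemma gd_log (m : ℕ) {s : ℝ} (hs : 0 < s) (z : EuclideanSpace ℝ (Fin m)) :
    Real.log (gaussDensity m s z) =
      Real.log ((2 * Real.pi * s) ^ (-(m : ℝ) / 2)) + -‖z‖ ^ 2 / (2 * s) := by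
  unfold gaussDensity
  rw [Real.log_mul (by positivity) (Real.exp_pos _).ne', Real.log_exp]

lemma integrable_gauss_norm (m : ℕ) {b : ℝ} (hb : 0 < b) :
    Integrable (fun v : EuclideanSpace ℝ (Fin m) => Real.exp (-b * ‖v‖ ^ 2)) := by
  by_contra h
  have h1 := GaussianFourier.integral_rexp_neg_mul_sq_norm
    (V := EuclideanSpace ℝ (Fin m)) hb
  rw [integral_undef h] at h1
  have : 0 < (Real.pi / b) ^ (Module.finrank ℝ (EuclideanSpace ℝ (Fin m)) / 2 : ℝ) := by
    positivity
  exact this.ne h1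

lemma gd_int (m : ℕ) {s : ℝ} (hs : 0 < s) : Integrable (gaussDensity m s) := by
  have := (integrable_gauss_norm m (b := 1 / (2 * s)) (by positivity)).const_mul
    ((2 * Real.pi * s) ^ (-(m : ℝ) / 2))
  refine this.congr (Filter.Eventually.of_forall fun z => ?_)
  simp only [gaussDensity]
  congr 2
  field_simp

lemma gd_int_inner (m : ℕ) {s : ℝ} (hs : 0 < s) (c : EuclideanSpace ℝ (Fin m)) :
    Integrable (fun z => gaussDensity m s z * inner ℝ z c) := by
  have := ((integrable_gauss_norm m (b := 1 / (4 * s)) (by positivity)).const_mul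
    ((2 * Real.pi * s) ^ (-(m : ℝ) / 2) * ((1 + 4 * s) * ‖c‖)))
  refine this.mono' ((gd_cont m s).mul (by fun_prop)).aestronglyMeasurable
    (Filter.Eventually.of_forall fun z => ?_)
  rw [Real.norm_eq_abs, abs_mul, abs_of_pos (gd_pos m hs z)]
  have h1 : |inner ℝ z c| ≤ ‖z‖ * ‖c‖ := abs_real_inner_le_norm z c
  have e : gaussDensity m s z = (2 * Real.pi * s) ^ (-(m : ℝ) / 2) *
      (Real.exp (-(1 / (4 * s)) * ‖z‖ ^ 2) * Real.exp (-(1 / (4 * s)) * ‖z‖ ^ 2)) := by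
    rw [← Real.exp_add]; simp only [gaussDensity]; congr 2; field_simp; ring
  set E := Real.exp (-(1 / (4 * s)) * ‖z‖ ^ 2) with hE
  have hE0 : 0 < E := Real.exp_pos _
  have h2 : E * ‖z‖ ≤ 1 + 4 * s := by
    have h3 : E * (1 / (4 * s) * ‖z‖ ^ 2 + 1) ≤ 1 := by
      calc _ ≤ E * Real.exp (1 / (4 * s) * ‖z‖ ^ 2) := by
            gcongr; exact Real.add_one_le_exp _
        _ = 1 := by rw [hE, ← Real.exp_add]; simp
    have h4 : ‖z‖ ≤ (1 + 4 * s) * (1 / (4 * s) * ‖z‖ ^ 2 + 1) := by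
      have : (1 + 4 * s) * (1 / (4 * s) * ‖z‖ ^ 2 + 1)
        = ‖z‖ ^ 2 + 1 + (1 / (4 * s) * ‖z‖ ^ 2 + 4 * s) := by field_simp; ring
      have : 0 ≤ 1 / (4 * s) * ‖z‖ ^ 2 + 4 * s := by positivity
      nlinarith [sq_nonneg (‖z‖ - 1)]
    calc E * ‖z‖ ≤ E * ((1 + 4 * s) * (1 / (4 * s) * ‖z‖ ^ 2 + 1)) := by gcongr
      _ = (1 + 4 * s) * (E * (1 / (4 * s) * ‖z‖ ^ 2 + 1)) := by ring
      _ ≤ (1 + 4 * s) * 1 := by gcongr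
      _ = _ := by ring
  rw [e]
  calc _ ≤ (2 * Real.pi * s) ^ (-(m : ℝ) / 2) * (E * E) * (‖z‖ * ‖c‖) := by gcongr
    _ = (2 * Real.pi * s) ^ (-(m : ℝ) / 2) * ((E * ‖z‖) * ‖c‖) * E := by ring
    _ ≤ _ := by gcongr

lemma gd_int_inner_zero (m : ℕ) {s : ℝ} (c : EuclideanSpace ℝ (Fin m)) :
    ∫ z, gaussDensity m s z * inner ℝ z c = 0 := by
  have h := integral_neg_eq_self (fun z => gaussDensity m s z * inner ℝ z c)
    (volume : Measure (EuclideanSpace ℝ (Fin m)))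
  have e : ∀ z : EuclideanSpace ℝ (Fin m), gaussDensity m s (-z) * inner ℝ (-z) c
      = -(gaussDensity m s z * inner ℝ z c) := by
    intro z; simp [gaussDensity, inner_neg_left]
  simp_rw [e, integral_neg] at h
  linarith

lemma gauss_kl (m : ℕ) {s : ℝ} (hs : 0 < s) (h1 : ∫ z, gaussDensity m s z = 1)
    (a b : EuclideanSpace ℝ (Fin m)) :
    ∫⁻ y, ENNReal.ofReal (entD (gaussDensity m s (y - a)) (gaussDensity m s (y - b)))
      = ENNReal.ofReal (‖a - b‖ ^ 2 / (2 * s)) := by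
  set c := a - b with hc
  have e0 : ∀ y, ENNReal.ofReal (entD (gaussDensity m s (y - a)) (gaussDensity m s (y - b)))
      = (fun z => ENNReal.ofReal (entD (gaussDensity m s z) (gaussDensity m s (z + c)))) (y - a) := by
    intro y; simp [hc]
  rw [lintegral_congr e0, lintegral_sub_right_eq_self
    (fun z => ENNReal.ofReal (entD (gaussDensity m s z) (gaussDensity m s (z + c))))]
  have e1 : ∀ z, entD (gaussDensity m s z) (gaussDensity m s (z + c)) =
      (1 / s) * (gaussDensity m s z * inner ℝ z c) + (‖c‖ ^ 2 / (2 * s) - 1) * gaussDensity m s z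
        + gaussDensity m s (z + c) := by
    intro z
    unfold entD
    rw [gd_log m hs, gd_log m hs, norm_add_sq_real]
    field_simp
    ring
  have i1 := (gd_int_inner m hs c).const_mul (1 / s)
  have i2 := (gd_int m hs).const_mul (‖c‖ ^ 2 / (2 * s) - 1)
  have i3 := (gd_int m hs).comp_add_right c
  have i12 : Integrable (fun z => (1 / s) * (gaussDensity m s z * inner ℝ z c)
    + (‖c‖ ^ 2 / (2 * s) - 1) * gaussDensity m s z) := i1.add i2
  rw [← ofReal_integral_eq_lintegral_ofReal]
  · congr 1
    simp_rw [e1]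
    rw [integral_add i12 i3, integral_add i1 i2, integral_const_mul, integral_const_mul,
      gd_int_inner_zero, integral_add_right_eq_self (gaussDensity m s), h1]
    ring
  · simp_rw [e1]; exact i12.add i3
  · exact Filter.Eventually.of_forall fun z => entD_nonneg (gd_pos m hs _) (gd_pos m hs _)

/-- If `x ~ p` has finite second moment with `m₂² = E‖x − E x‖²`, and
`y₁ = A x + ξ` with `ξ ~ N(0, η₁² I_m)` independent of `x`, then the expected total
variation between the posterior of `x` given `y₁` and the prior `p` is at most
`‖A‖ m₂ / (2η₁)`. -/
theorem expected_tv_posterior_prior_le (d m : ℕ)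
    {Ω : Type*} [MeasureSpace Ω] [IsProbabilityMeasure (ℙ : Measure Ω)]
    (x : Ω → EuclideanSpace ℝ (Fin d)) (ξ : Ω → EuclideanSpace ℝ (Fin m))
    (hx : Measurable x) (hξ : Measurable ξ)
    (A : EuclideanSpace ℝ (Fin d) →L[ℝ] EuclideanSpace ℝ (Fin m))
    (η₁ : ℝ) (hη₁ : 0 < η₁)
    (hξlaw : Measure.map ξ ℙ = gaussMeasure m (η₁ ^ 2))
    (hindep : IndepFun x ξ ℙ)
    (hmom : Integrable (fun ω => ‖x ω‖ ^ 2) ℙ)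
    (y₁ : Ω → EuclideanSpace ℝ (Fin m)) (hy₁ : ∀ ω, y₁ ω = A (x ω) + ξ ω)
    (m₂ : ℝ) (hm₂ : m₂ = Real.sqrt (∫ ω, ‖x ω - ∫ ω', x ω' ∂ℙ‖ ^ 2 ∂ℙ)) :
    (∫ ω, tvDist ((condDistrib x y₁ ℙ) (y₁ ω)) (Measure.map x ℙ) ∂ℙ) ≤
      ‖A‖ * m₂ / (2 * η₁) := by
  classical
  have hs : 0 < η₁ ^ 2 := by positivity
  set s := η₁ ^ 2 with hsdef
  set P := Measure.map x ℙ with hP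
  have hPprob : IsProbabilityMeasure P := Measure.isProbabilityMeasure_map hx.aemeasurable
  have hy₁' : y₁ = fun ω => A (x ω) + ξ ω := funext hy₁
  have hy : Measurable y₁ := by rw [hy₁']; fun_prop
  set φ := gaussDensity m s with hφ
  have φc : Continuous φ := gd_cont m s
  have φm : Measurable φ := φc.measurable
  have φ0 : ∀ z, 0 < φ z := gd_pos m hs
  set C : ℝ := (2 * Real.pi * s) ^ (-(m : ℝ) / 2) with hC
  have φC : ∀ z, φ z ≤ C := gd_le m hs
  have hφ1 : ∫ z, φ z = 1 := by
    have h : (Measure.map ξ ℙ) Set.univ = 1 :=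
      (Measure.isProbabilityMeasure_map hξ.aemeasurable).measure_univ
    rw [hξlaw, gaussMeasure, withDensity_apply _ MeasurableSet.univ, Measure.restrict_univ,
      ← ofReal_integral_eq_lintegral_ofReal (gd_int m hs)
        (Filter.Eventually.of_forall fun z => (φ0 z).le)] at h
    exact ENNReal.ofReal_eq_one.1 h
  -- joint law
  have J : ∀ u : EuclideanSpace ℝ (Fin m) × EuclideanSpace ℝ (Fin d) → ENNReal, Measurable u →
      ∫⁻ ω, u (y₁ ω, x ω) ∂ℙ = ∫⁻ y, ∫⁻ a, u (y, a) * ENNReal.ofReal (φ (y - A a)) ∂P := by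
    intro u hu
    have hj := hindep.map_prod_eq_prod_map_map hx.aemeasurable hξ.aemeasurable
    have hξprob : IsProbabilityMeasure (Measure.map ξ ℙ) :=
      Measure.isProbabilityMeasure_map hξ.aemeasurable
    calc ∫⁻ ω, u (y₁ ω, x ω) ∂ℙ
        = ∫⁻ p, u (A p.1 + p.2, p.1) ∂(Measure.map (fun ω => (x ω, ξ ω)) ℙ) := by
          rw [lintegral_map (by fun_prop) (by fun_prop), hy₁']
      _ = ∫⁻ a, ∫⁻ z, u (A a + z, a) ∂(Measure.map ξ ℙ) ∂P := by
          rw [hj, lintegral_prod _ (by fun_prop)]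
      _ = ∫⁻ a, (∫⁻ y, u (y, a) * ENNReal.ofReal (φ (y - A a))) ∂P := by
          refine lintegral_congr fun a => ?_
          rw [hξlaw, gaussMeasure, lintegral_withDensity_eq_lintegral_mul _ φm.ennreal_ofReal
            (by fun_prop), ← lintegral_add_left_eq_self
              (fun y => u (y, a) * ENNReal.ofReal (φ (y - A a))) (A a)]
          refine lintegral_congr fun z => ?_
          simp [mul_comm, hφ]
      _ = _ := by
          rw [lintegral_lintegral_swap]
          fun_prop
  -- marginal density
  set q : EuclideanSpace ℝ (Fin m) → ℝ := fun y => ∫ a, φ (y - A a) ∂P with hq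
  have fint : ∀ y, Integrable (fun a => φ (y - A a)) P := fun y =>
    integrable_of_range P (f := fun a => φ (y - A a)) (by fun_prop) (fun _ => φ0 _)
      (fun _ => φC _) continuous_id
  have q0 : ∀ y, 0 < q y := fun y => by
    rw [hq]
    simp only
    rw [integral_pos_iff_support_of_nonneg (fun a => (φ0 _).le) (fint y)]
    have : Function.support (fun a => φ (y - A a)) = Set.univ := by
      ext a; simp [(φ0 _).ne']
    rw [this]; simp
  have qm : Measurable q := by
    have : StronglyMeasurable (fun p : EuclideanSpace ℝ (Fin m) × EuclideanSpace ℝ (Fin d) =>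
      φ (p.1 - A p.2)) := Measurable.stronglyMeasurable (by fun_prop)
    exact this.integral_prod_right'.measurable
  have qof : ∀ y, ∫⁻ a, ENNReal.ofReal (φ (y - A a)) ∂P = ENNReal.ofReal (q y) := fun y =>
    (ofReal_integral_eq_lintegral_ofReal (fint y)
      (Filter.Eventually.of_forall fun a => (φ0 _).le)).symm
  have Q : ∀ v : EuclideanSpace ℝ (Fin m) → ENNReal, Measurable v →
      ∫⁻ ω, v (y₁ ω) ∂ℙ = ∫⁻ y, v y * ENNReal.ofReal (q y) := by
    intro v hv
    rw [J (fun p => v p.1) (by fun_prop)]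
    refine lintegral_congr fun y => ?_
    simp only
    rw [lintegral_const_mul _ (by fun_prop), qof]
  -- posterior kernel
  set r : EuclideanSpace ℝ (Fin m) → EuclideanSpace ℝ (Fin d) → ℝ :=
    fun y a => φ (y - A a) / q y with hr
  have rm : Measurable (Function.uncurry fun y a => ENNReal.ofReal (r y a)) := by
    simp only [hr, Function.uncurry_def]; fun_prop
  have r1 : ∀ y, ∫ a, r y a ∂P = 1 := fun y => by
    simp only [hr]; rw [integral_div]; exact div_self (q0 y).ne'
  have ri : ∀ y, Integrable (r y) P := fun y => (fint y).div_const _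
  have r0 : ∀ y a, 0 ≤ r y a := fun y a => (div_pos (φ0 _) (q0 y)).le
  set κ : Kernel (EuclideanSpace ℝ (Fin m)) (EuclideanSpace ℝ (Fin d)) :=
    Kernel.withDensity (Kernel.const _ P) (fun y a => ENNReal.ofReal (r y a)) with hκ
  have κapp : ∀ y, κ y = P.withDensity (fun a => ENNReal.ofReal (r y a)) := fun y => by
    rw [hκ, Kernel.withDensity_apply _ rm, Kernel.const_apply]
  have κfin : IsFiniteKernel κ := by
    refine ⟨⟨1, ENNReal.one_lt_top, fun y => ?_⟩⟩
    rw [κapp, withDensity_apply _ MeasurableSet.univ, Measure.restrict_univ,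
      ← ofReal_integral_eq_lintegral_ofReal (ri y) (Filter.Eventually.of_forall (r0 y)), r1]
    simp
  have hcond : condDistrib x y₁ ℙ =ᵐ[Measure.map y₁ ℙ] κ := by
    apply condDistrib_ae_eq_of_measure_eq_compProd y₁ hx.aemeasurable
    apply Measure.ext_of_lintegral
    intro u hu
    rw [lintegral_map hu (by fun_prop), J u hu, Measure.lintegral_compProd hu,
      lintegral_map (Measurable.lintegral_kernel_prod_right' hu) hy,
      Q _ (Measurable.lintegral_kernel_prod_right' hu)]
    refine lintegral_congr fun y => ?_
    rw [κapp, lintegral_withDensity_eq_lintegral_mul _ (by fun_prop) (by fun_prop),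
      ← lintegral_mul_const _ (by fun_prop)]
    refine lintegral_congr fun a => ?_
    simp only [Pi.mul_apply]
    rw [mul_comm (ENNReal.ofReal (r y a)), mul_assoc, ← ENNReal.ofReal_mul (r0 y a)]
    congr 2
    simp only [hr]
    rw [div_mul_cancel₀ _ (q0 y).ne']
  -- the entropy function
  set μ0 : EuclideanSpace ℝ (Fin d) := ∫ ω', x ω' ∂ℙ with hμ0
  set h : EuclideanSpace ℝ (Fin m) → ℝ := fun y => ∫ a, entD (φ (y - A a)) (φ (y - A μ0)) ∂P with hh
  have Dm : Measurable (fun p : EuclideanSpace ℝ (Fin m) × EuclideanSpace ℝ (Fin d) =>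
      entD (φ (p.1 - A p.2)) (φ (p.1 - A μ0))) := by
    unfold entD; fun_prop
  have hm : Measurable h := Dm.stronglyMeasurable.integral_prod_right'.measurable
  have h0 : ∀ y, 0 ≤ h y := fun y => integral_nonneg fun a => entD_nonneg (φ0 _) (φ0 _)
  have hof : ∀ y, ENNReal.ofReal (h y) =
      ∫⁻ a, ENNReal.ofReal (entD (φ (y - A a)) (φ (y - A μ0))) ∂P := fun y =>
    ofReal_integral_eq_lintegral_ofReal
      (integrable_of_range P (f := fun a => φ (y - A a)) (by fun_prop) (fun _ => φ0 _)
        (fun _ => φC _) (entD_continuous _))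
      (Filter.Eventually.of_forall fun a => entD_nonneg (φ0 _) (φ0 _))
  set V : ℝ := ∫ ω, ‖x ω - μ0‖ ^ 2 ∂ℙ with hV
  have V0 : 0 ≤ V := integral_nonneg fun ω => by positivity
  have xL2 : MemLp x 2 ℙ := (memLp_two_iff_integrable_sq_norm hx.aestronglyMeasurable).2 hmom
  have Vint : Integrable (fun ω => ‖x ω - μ0‖ ^ 2) ℙ :=
    (memLp_two_iff_integrable_sq_norm (hx.sub_const _).aestronglyMeasurable).1
      (xL2.sub (memLp_const μ0))
  have hK : ∫⁻ ω, ENNReal.ofReal (h (y₁ ω) / q (y₁ ω)) ∂ℙ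
      ≤ ENNReal.ofReal (‖A‖ ^ 2 * V / (2 * s)) := by
    rw [Q (fun y => ENNReal.ofReal (h y / q y)) (by fun_prop)]
    calc ∫⁻ y, ENNReal.ofReal (h y / q y) * ENNReal.ofReal (q y)
        = ∫⁻ y, ∫⁻ a, ENNReal.ofReal (entD (φ (y - A a)) (φ (y - A μ0))) ∂P := by
          refine lintegral_congr fun y => ?_
          rw [← ENNReal.ofReal_mul (div_nonneg (h0 y) (q0 y).le), div_mul_cancel₀ _ (q0 y).ne', hof]
      _ = ∫⁻ a, (∫⁻ y, ENNReal.ofReal (entD (φ (y - A a)) (φ (y - A μ0)))) ∂P := by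
          rw [lintegral_lintegral_swap]
          exact Dm.ennreal_ofReal.aemeasurable
      _ = ∫⁻ a, ENNReal.ofReal (‖A a - A μ0‖ ^ 2 / (2 * s)) ∂P := by
          refine lintegral_congr fun a => ?_
          exact gauss_kl m hs hφ1 _ _
      _ = ∫⁻ ω, ENNReal.ofReal (‖A (x ω) - A μ0‖ ^ 2 / (2 * s)) ∂ℙ := by
          rw [hP, lintegral_map (by fun_prop) hx]
      _ ≤ ∫⁻ ω, ENNReal.ofReal (‖A‖ ^ 2 * ‖x ω - μ0‖ ^ 2 / (2 * s)) ∂ℙ := by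
          refine lintegral_mono fun ω => ENNReal.ofReal_le_ofReal ?_
          rw [← map_sub, ← mul_pow]
          gcongr
          exact A.le_opNorm _
      _ = _ := by
          rw [← ofReal_integral_eq_lintegral_ofReal ((Vint.const_mul _).div_const _)
            (Filter.Eventually.of_forall fun ω => by positivity), integral_div, integral_const_mul]
  have hqm : Measurable fun ω => h (y₁ ω) / q (y₁ ω) := by fun_prop
  have hqn : ∀ ω, 0 ≤ h (y₁ ω) / q (y₁ ω) := fun ω => div_nonneg (h0 _) (q0 _).le
  have hqi : Integrable (fun ω => h (y₁ ω) / q (y₁ ω)) ℙ := by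
    refine ⟨hqm.aestronglyMeasurable, ?_⟩
    rw [hasFiniteIntegral_iff_ofReal (Filter.Eventually.of_forall hqn)]
    exact hK.trans_lt ENNReal.ofReal_lt_top
  have hqK : ∫ ω, h (y₁ ω) / q (y₁ ω) ∂ℙ ≤ ‖A‖ ^ 2 * V / (2 * s) := by
    rw [integral_eq_lintegral_of_nonneg_ae (Filter.Eventually.of_forall hqn)
      hqm.aestronglyMeasurable]
    exact ENNReal.toReal_le_of_le_ofReal (by positivity) hK
  -- TV bound for every parameter
  have main : ∀ l : ℝ, 0 < l →
      (∫ ω, tvDist ((condDistrib x y₁ ℙ) (y₁ ω)) P ∂ℙ) ≤ l / 2 + ‖A‖ ^ 2 * V / (2 * s) / (4 * l) := by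
    intro l hl
    have hae : ∀ᵐ ω ∂ℙ, tvDist ((condDistrib x y₁ ℙ) (y₁ ω)) P ≤
        l / 2 + h (y₁ ω) / q (y₁ ω) / (4 * l) := by
      filter_upwards [ae_of_ae_map hy.aemeasurable hcond] with ω hω
      rw [hω, κapp]
      set y := y₁ ω
      refine (tv_bound P (r0 y) (ri y) (r1 y)).trans ?_
      have hb := pt_bound P (f := fun a => φ (y - A a)) (by fun_prop) (fun _ => φ0 _)
        (fun _ => φC _) (q := q y) (g := φ (y - A μ0)) rfl (q0 y) (φ0 _) hl
      have e : ∀ a, |r y a - 1| = |φ (y - A a) - q y| / q y := by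
        intro a
        rw [← abs_of_pos (q0 y), ← abs_div, abs_of_pos (q0 y), sub_div, div_self (q0 y).ne']
      simp_rw [e]
      rw [integral_div]
      have := q0 y
      calc _ ≤ (l * q y + h y / (2 * l)) / q y / 2 := by gcongr
        _ = _ := by field_simp; ring
    calc _ ≤ ∫ ω, (l / 2 + h (y₁ ω) / q (y₁ ω) / (4 * l)) ∂ℙ :=
          integral_mono_of_nonneg (Filter.Eventually.of_forall fun ω => tv_nonneg _ _)
            ((integrable_const _).add (hqi.div_const _)) hae
      _ = l / 2 + (∫ ω, h (y₁ ω) / q (y₁ ω) ∂ℙ) / (4 * l) := by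
          rw [integral_add (integrable_const _) (hqi.div_const _), integral_div (4 * l)]; simp
      _ ≤ _ := by
          have := div_le_div_of_nonneg_right hqK (by positivity : 0 ≤ 4 * l)
          linarith
  have hVm : V = m₂ ^ 2 := by rw [hm₂, Real.sq_sqrt V0]
  have hm0 : 0 ≤ m₂ := by rw [hm₂]; exact Real.sqrt_nonneg _
  rcases (mul_nonneg (norm_nonneg A) hm0).eq_or_lt with hz | hpos
  · have hz2 : ‖A‖ ^ 2 * V = 0 := by rw [hVm, ← mul_pow, ← hz]; simp
    rw [← hz, zero_div]
    refine le_of_forall_pos_le_add fun ε hε => ?_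
    have := main (2 * ε) (by positivity)
    rw [hz2] at this
    simpa using this
  · refine (main (‖A‖ * m₂ / (2 * η₁)) (by positivity)).trans (le_of_eq ?_)
    rw [hVm, ← mul_pow, hsdef]
    set k := ‖A‖ * m₂
    field_simp
    ring
end

section
/- Let w ∈ (0, 0.01) and let p be the density on ℝ² of the uniform distribution on the unit circle convolved with N(0, w² I₂), i.e., p(x) = (1/2π) ∫₀^{2π} (1/(2πw²)) exp( −‖x − (cos θ, sin θ)‖²/(2w²) ) dθ. Then for every x ∈ ℝ² with r = ‖x‖ > 0, the Hessian of log p satisfies: ∇² log p(x) ⪯ (1/(2w⁴) − 1/w²)·I₂ if 0 < r ≤ w²; ∇² log p(x) ⪯ (1/(w²·r) − 1/w²)·I₂ if w² < r ≤ 1; and ∇² log p(x) ⪯ 0 if r > 1. -/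
open Real

lemma ring_param {E F : Type*} [NormedAddCommGroup E] [NormedSpace ℝ E] [FiniteDimensional ℝ E]
    [NormedAddCommGroup F] [NormedSpace ℝ F] [CompleteSpace F]
    (U : ℝ → E →L[ℝ] ℝ) (hU : Continuous U) (f : ℝ → F) (hf : Continuous f) (a b : ℝ) (y : E) :
    HasFDerivAt (fun y => ∫ θ in a..b, Real.exp (U θ y) • f θ)
      (∫ θ in a..b, Real.exp (U θ y) • (U θ).smulRight (f θ)) y := by
  have hc : Continuous (fun q : E × ℝ => Real.exp (U q.2 q.1) • (U q.2).smulRight (f q.2)) := by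
    have h1 : Continuous (fun q : E × ℝ => U q.2 q.1) := by fun_prop
    have h2 : Continuous (fun t : ℝ => (U t).smulRight (f t)) := by
      have : (fun t : ℝ => (U t).smulRight (f t)) =
        fun t => ContinuousLinearMap.smulRightL ℝ E F (U t) (f t) := by ext; simp
      rw [this]; fun_prop
    exact (Real.continuous_exp.comp h1).smul (h2.comp continuous_snd)
  obtain ⟨K, hK⟩ := ((isCompact_closedBall y 1).prod (isCompact_uIcc (a := a) (b := b))).exists_bound_of_continuousOn
    hc.continuousOn
  have hc' : ∀ z : E, Continuous (fun θ => Real.exp (U θ z) • f θ) := by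
    intro z; fun_prop
  refine intervalIntegral.hasFDerivAt_integral_of_dominated_of_fderiv_le
    (F := fun y θ => Real.exp (U θ y) • f θ)
    (F' := fun y θ => Real.exp (U θ y) • (U θ).smulRight (f θ)) (bound := fun _ => K)
    (s := Metric.closedBall y 1)
    (Metric.closedBall_mem_nhds y one_pos) ?_ ?_ ?_ ?_ ?_ ?_
  · exact Filter.Eventually.of_forall fun z => (hc' z).aestronglyMeasurable
  · exact (hc' y).intervalIntegrable _ _
  · exact (hc.comp (by fun_prop : Continuous fun t : ℝ => (y, t))).aestronglyMeasurable
  · refine Filter.Eventually.of_forall fun t ht z hz => ?_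
    exact hK (z, t) ⟨hz, Set.uIoc_subset_uIcc ht⟩
  · exact intervalIntegrable_const
  · refine Filter.Eventually.of_forall fun t ht z hz => ?_
    have h := ((U t).hasFDerivAt (x := z)).exp.smul_const (f t)
    convert h using 1
    ext v; simp [mul_smul]

lemma ring_cont {E F : Type*} [NormedAddCommGroup E] [NormedSpace ℝ E]
    [NormedAddCommGroup F] [NormedSpace ℝ F]
    (U : ℝ → E →L[ℝ] ℝ) (hU : Continuous U) (f : ℝ → F) (hf : Continuous f) (y : E) :
    Continuous (fun θ => Real.exp (U θ y) • (U θ).smulRight (f θ)) := by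
  have h2 : Continuous (fun t : ℝ => (U t).smulRight (f t)) := by
    have : (fun t : ℝ => (U t).smulRight (f t)) =
      fun t => ContinuousLinearMap.smulRightL ℝ E F (U t) (f t) := by ext; simp
    rw [this]; fun_prop
  fun_prop

lemma ring_ftc (G g : ℝ → ℝ) (hG : ∀ t, HasDerivAt G (g t) t) (hg : Continuous g)
    (h : G (2 * π) = G 0) : ∫ t in (0:ℝ)..(2*π), g t = 0 := by
  rw [intervalIntegral.integral_eq_sub_of_hasDerivAt (fun t _ => hG t) (hg.intervalIntegrable _ _), h,
    sub_self]

lemma ring_param1 (f : ℝ → ℝ) (hf : Continuous f) (k : ℝ) :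
    HasDerivAt (fun k => ∫ θ in (0:ℝ)..(2*π), Real.exp (k * cos θ) * f θ)
      (∫ θ in (0:ℝ)..(2*π), Real.exp (k * cos θ) * (cos θ * f θ)) k := by
  have hU : Continuous (fun θ : ℝ => (cos θ) • ContinuousLinearMap.id ℝ ℝ) := by fun_prop
  have h := (ring_param (fun θ : ℝ => (cos θ) • ContinuousLinearMap.id ℝ ℝ) hU f hf 0 (2*π) k).hasDerivAt
  have e : (fun k => ∫ θ in (0:ℝ)..(2*π), Real.exp (k * cos θ) * f θ) = fun k : ℝ =>
      ∫ θ in (0:ℝ)..(2*π), Real.exp (((cos θ) • ContinuousLinearMap.id ℝ ℝ) k) • f θ := by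
    ext k; simp [mul_comm]
  rw [e]
  refine h.congr_deriv ?_
  rw [ContinuousLinearMap.intervalIntegral_apply]
  · simp [mul_comm]
  · exact (ring_cont _ hU f hf k).intervalIntegrable _ _

/-- moments -/
noncomputable def rM (f : ℝ → ℝ) (k : ℝ) : ℝ := ∫ θ in (0:ℝ)..(2*π), Real.exp (k * cos θ) * f θ

lemma rM_add (f g : ℝ → ℝ) (hf : Continuous f) (hg : Continuous g) (a b k : ℝ) :
    rM (fun t => a * f t + b * g t) k = a * rM f k + b * rM g k := by
  unfold rM
  rw [← intervalIntegral.integral_const_mul, ← intervalIntegral.integral_const_mul,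
    ← intervalIntegral.integral_add]
  · congr 1; ext t; ring
  all_goals apply Continuous.intervalIntegrable; fun_prop

lemma rM_nonneg (f : ℝ → ℝ) (hf : ∀ t, 0 ≤ f t) (k : ℝ) : 0 ≤ rM f k := by
  unfold rM
  exact intervalIntegral.integral_nonneg (by positivity) fun t _ => mul_nonneg (exp_pos _).le (hf t)

/-- integration by parts -/
lemma rM_parts (F f : ℝ → ℝ) (hF : ∀ t, HasDerivAt F (f t) t) (hf : Continuous f)
    (h : F (2 * π) = F 0) (k : ℝ) : rM (fun t => f t) k = k * rM (fun t => sin t * F t) k := by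
  have hFc : Continuous F := continuous_iff_continuousAt.2 fun t => (hF t).continuousAt
  have := ring_ftc (fun t => Real.exp (k * cos t) * F t)
    (fun t => Real.exp (k * cos t) * (1 * f t + (-k) * (sin t * F t))) ?_ (by fun_prop) (by simp [h])
  · have h2 := rM_add f (fun t => sin t * F t) hf (by fun_prop) 1 (-k) k
    unfold rM at h2 ⊢
    linarith
  · intro t
    have := (((hasDerivAt_cos t).const_mul k).exp).mul (hF t)
    exact this.congr_deriv (by ring)

lemma rM_deriv (f : ℝ → ℝ) (hf : Continuous f) (k : ℝ) :
    HasDerivAt (rM f) (rM (fun t => cos t * f t) k) k := ring_param1 f hf k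

lemma rM_one_pos (k : ℝ) : 0 < rM (fun _ => 1) k := by
  unfold rM
  apply intervalIntegral.intervalIntegral_pos_of_pos
  · apply Continuous.intervalIntegrable; fun_prop
  · intro t; positivity
  · positivity

lemma rM_sin (k : ℝ) (hk : 0 < k) : rM (fun t => sin t) k = 0 := by
  have := rM_parts (fun _ => 1) (fun _ => 0) (fun t => hasDerivAt_const t _) (by fun_prop) rfl k
  have h0 : rM (fun _ => 0) k = 0 := by simp [rM]
  simp only [mul_one] at this
  rw [h0] at this
  rcases mul_eq_zero.1 this.symm with h | h
  · linarith
  · exact h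

lemma rM_sincos (k : ℝ) (hk : 0 < k) : rM (fun t => sin t * cos t) k = 0 := by
  have := rM_parts (fun t => cos t) (fun t => -sin t) hasDerivAt_cos (by fun_prop) (by simp) k
  have h0 := rM_add sin sin continuous_sin continuous_sin (-1) 0 k
  simp only [zero_mul, add_zero, neg_mul, one_mul] at h0
  rw [h0, show rM sin k = 0 from rM_sin k hk, neg_zero] at this
  rcases mul_eq_zero.1 this.symm with h | h
  · linarith
  · exact h

lemma rM_cos (k : ℝ) : rM (fun t => cos t) k = k * rM (fun t => sin t ^ 2) k := by
  have := rM_parts (fun t => sin t) (fun t => cos t) hasDerivAt_sin (by fun_prop) (by simp) k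
  simpa [pow_two] using this

lemma rM_S' (k : ℝ) (hk : 0 ≤ k) : 0 ≤ rM (fun t => cos t * sin t ^ 2) k := by
  have := rM_parts (fun t => sin t ^ 3 / 3) (fun t => cos t * sin t ^ 2) ?_ (by fun_prop) (by simp) k
  · rw [this]
    refine mul_nonneg hk (rM_nonneg _ (fun t => ?_) k)
    have : sin t * (sin t ^ 3 / 3) = sin t ^ 4 / 3 := by ring
    rw [this]; positivity
  · intro t
    exact (((hasDerivAt_sin t).pow 3).div_const 3).congr_deriv (by norm_num; ring)

lemma rM_cos2 (k : ℝ) : rM (fun t => cos t ^ 2) k = rM (fun _ => 1) k - rM (fun t => sin t ^ 2) k := by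
  have := rM_add (fun _ => 1) (fun t => sin t ^ 2) (by fun_prop) (by fun_prop) 1 (-1) k
  have h : (fun t => cos t ^ 2) = fun t => 1 * 1 + (-1) * sin t ^ 2 := by
    ext t; have := sin_sq_add_cos_sq t; linarith
  rw [h, this]; ring

lemma rM_half (k : ℝ) (hk : 0 ≤ k) : 2 * rM (fun t => sin t ^ 2) k ≤ rM (fun _ => 1) k := by
  have := rM_parts (fun t => sin t * cos t) (fun t => 1 * cos t ^ 2 + (-1) * sin t ^ 2) ?_
    (by fun_prop) (by simp) k
  · have h2 := rM_add (fun t => cos t ^ 2) (fun t => sin t ^ 2) (by fun_prop) (by fun_prop) 1 (-1) k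
    rw [h2, rM_cos2, show (fun t => sin t * (sin t * cos t)) = fun t => cos t * sin t ^ 2 by
      ext t; ring] at this
    have := mul_nonneg hk (rM_S' k hk)
    linarith
  · intro t
    exact ((hasDerivAt_sin t).mul (hasDerivAt_cos t)).congr_deriv (by ring)

lemma rM_cos_le (k : ℝ) : rM (fun t => cos t) k ≤ rM (fun _ => 1) k := by
  have := rM_add (fun _ => 1) (fun t => cos t) (by fun_prop) (by fun_prop) 1 (-1) k
  have h := rM_nonneg (fun t => 1 * 1 + (-1) * cos t) (fun t => by linarith [cos_le_one t]) k
  linarith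

lemma rM_key (k : ℝ) (hk : 0 ≤ k) :
    0 ≤ rM (fun t => cos t) k ^ 2 + 2 * rM (fun _ => 1) k * rM (fun t => sin t ^ 2) k
      - rM (fun _ => 1) k ^ 2 := by
  have hd : ∀ k, HasDerivAt (fun k => rM (fun t => cos t) k ^ 2 +
      2 * rM (fun _ => 1) k * rM (fun t => sin t ^ 2) k - rM (fun _ => 1) k ^ 2)
      (2 * rM (fun _ => 1) k * rM (fun t => cos t * sin t ^ 2) k) k := by
    intro k
    have hZ := rM_deriv (fun _ => 1) (by fun_prop) k
    have hC := rM_deriv (fun t => cos t) (by fun_prop) k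
    have hS := rM_deriv (fun t => sin t ^ 2) (by fun_prop) k
    have e : (fun t => cos t * cos t) = fun t => cos t ^ 2 := by ext t; ring
    rw [e, rM_cos2] at hC
    simp only [mul_one] at hZ
    exact (((hC.pow 2).add ((hZ.const_mul 2).mul hS)).sub (hZ.pow 2)).congr_deriv
      (by norm_num; ring)
  have hm : MonotoneOn (fun k => rM (fun t => cos t) k ^ 2 +
      2 * rM (fun _ => 1) k * rM (fun t => sin t ^ 2) k - rM (fun _ => 1) k ^ 2) (Set.Ici 0) := by
    apply monotoneOn_of_deriv_nonneg (convex_Ici 0)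
    · exact fun k _ => (hd k).continuousAt.continuousWithinAt
    · exact fun k _ => (hd k).differentiableAt.differentiableWithinAt
    · intro k hk
      rw [interior_Ici] at hk
      rw [(hd k).deriv]
      exact mul_nonneg (mul_nonneg two_pos.le (rM_one_pos k).le) (rM_S' k (le_of_lt hk))
  have h := hm (Set.mem_Ici.2 le_rfl) (Set.mem_Ici.2 hk) hk
  refine le_trans (le_of_eq ?_) h
  simp [rM, integral_sin_sq, integral_cos]
  ring

/-- quadratic form bound -/
lemma rM_quad (k : ℝ) (hk : 0 < k) (a b : ℝ) :
    rM (fun _ => 1) k * rM (fun t => (a * cos t + b * sin t) ^ 2) k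
      - rM (fun t => a * cos t + b * sin t) k ^ 2
      ≤ rM (fun _ => 1) k * rM (fun t => sin t ^ 2) k * (a ^ 2 + b ^ 2) := by
  have h1 := rM_add (fun t => cos t) (fun t => sin t) (by fun_prop) (by fun_prop) a b k
  have h2 := rM_add (fun t => a ^ 2 * cos t ^ 2 + b ^ 2 * sin t ^ 2) (fun t => sin t * cos t)
    (by fun_prop) (by fun_prop) 1 (2 * a * b) k
  have h3 := rM_add (fun t => cos t ^ 2) (fun t => sin t ^ 2) (by fun_prop) (by fun_prop)
    (a ^ 2) (b ^ 2) k
  have e : (fun t => (a * cos t + b * sin t) ^ 2) = fun t =>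
      1 * (a ^ 2 * cos t ^ 2 + b ^ 2 * sin t ^ 2) + (2 * a * b) * (sin t * cos t) := by
    ext t; ring
  rw [e, h2, h3, h1, rM_sin k hk, rM_sincos k hk, rM_cos2]
  have := mul_nonneg (sq_nonneg a) (rM_key k hk.le)
  nlinarith

/-- the linear functional `y ↦ ⟨y, u_θ⟩ / w²` -/
noncomputable def rU (w θ : ℝ) : EuclideanSpace ℝ (Fin 2) →L[ℝ] ℝ :=
  (w ^ 2)⁻¹ • (cos θ • EuclideanSpace.proj (𝕜 := ℝ) (0 : Fin 2) + sin θ • EuclideanSpace.proj (𝕜 := ℝ) (1 : Fin 2))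

lemma rU_apply (w θ : ℝ) (y : EuclideanSpace ℝ (Fin 2)) :
    rU w θ y = (w ^ 2)⁻¹ * (cos θ * y 0 + sin θ * y 1) := by
  simp [rU, mul_add]

lemma rU_cont (w : ℝ) : Continuous (rU w) := by unfold rU; fun_prop

noncomputable def rP (w : ℝ) (y : EuclideanSpace ℝ (Fin 2)) : ℝ :=
  ∫ θ in (0:ℝ)..(2*π), Real.exp (rU w θ y)

lemma rP_pos (w : ℝ) (y : EuclideanSpace ℝ (Fin 2)) : 0 < rP w y := by
  have := rU_cont w
  unfold rP
  apply intervalIntegral.intervalIntegral_pos_of_pos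
  · apply Continuous.intervalIntegrable; fun_prop
  · intro t; positivity
  · positivity

noncomputable def rG (w : ℝ) (y : EuclideanSpace ℝ (Fin 2)) : EuclideanSpace ℝ (Fin 2) →L[ℝ] ℝ :=
  ∫ θ in (0:ℝ)..(2*π), Real.exp (rU w θ y) • rU w θ

noncomputable def rH (w : ℝ) (y : EuclideanSpace ℝ (Fin 2)) :
    EuclideanSpace ℝ (Fin 2) →L[ℝ] EuclideanSpace ℝ (Fin 2) →L[ℝ] ℝ :=
  ∫ θ in (0:ℝ)..(2*π), Real.exp (rU w θ y) • (rU w θ).smulRight (rU w θ)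

lemma rP_deriv (w : ℝ) (y : EuclideanSpace ℝ (Fin 2)) : HasFDerivAt (rP w) (rG w y) y := by
  have h := ring_param (rU w) (rU_cont w) (fun _ => (1:ℝ)) continuous_const 0 (2*π) y
  have e : ∀ t, (rU w t).smulRight (1:ℝ) = rU w t := by intro t; ext; simp
  simp only [smul_eq_mul, mul_one, e] at h
  exact h

lemma rG_deriv (w : ℝ) (y : EuclideanSpace ℝ (Fin 2)) : HasFDerivAt (rG w) (rH w y) y :=
  ring_param (rU w) (rU_cont w) (rU w) (rU_cont w) 0 (2*π) y

lemma rG_apply (w : ℝ) (y v : EuclideanSpace ℝ (Fin 2)) :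
    rG w y v = ∫ θ in (0:ℝ)..(2*π), Real.exp (rU w θ y) * rU w θ v := by
  have hU := rU_cont w
  unfold rG
  rw [ContinuousLinearMap.intervalIntegral_apply]
  · simp
  · apply Continuous.intervalIntegrable; fun_prop

lemma rH_apply (w : ℝ) (y v : EuclideanSpace ℝ (Fin 2)) :
    rH w y v v = ∫ θ in (0:ℝ)..(2*π), Real.exp (rU w θ y) * (rU w θ v) ^ 2 := by
  have hU := rU_cont w
  unfold rH
  rw [ContinuousLinearMap.intervalIntegral_apply, ContinuousLinearMap.intervalIntegral_apply]
  · simp [pow_two]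
  · apply Continuous.intervalIntegrable
    simp only [_root_.smul_apply, ContinuousLinearMap.smulRight_apply]
    fun_prop
  · exact (ring_cont _ hU _ hU y).intervalIntegrable _ _

lemma ring_shift (g : ℝ → ℝ) (hg : Function.Periodic g (2 * π)) (φ : ℝ) :
    ∫ θ in (0:ℝ)..(2*π), g θ = ∫ θ in (0:ℝ)..(2*π), g (θ + φ) := by
  rw [intervalIntegral.integral_comp_add_right]
  have := hg.intervalIntegral_add_eq 0 φ
  rw [zero_add] at this ⊢
  rw [this, add_comm]

lemma rU_per (w θ : ℝ) : rU w (θ + 2 * π) = rU w θ := by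
  simp [rU]

lemma ring_hess_bound (w : ℝ) (hw : 0 < w) (x v : EuclideanSpace ℝ (Fin 2)) (hx : 0 < ‖x‖) :
    ∃ s : ℝ, s ≤ 1 / 2 ∧ s ≤ w ^ 2 / ‖x‖ ∧
      (rP w x)⁻¹ * rH w x v v - ((rP w x)⁻¹ * rG w x v) ^ 2 ≤ s * (‖v‖ ^ 2 / w ^ 4) := by
  obtain ⟨φ, h0, h1⟩ : ∃ φ, x 0 = ‖x‖ * cos φ ∧ x 1 = ‖x‖ * sin φ := by
    have hn : ‖(⟨x 0, x 1⟩ : ℂ)‖ = ‖x‖ := by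
      rw [EuclideanSpace.norm_eq, Complex.norm_eq_sqrt_sq_add_sq]
      simp [Fin.sum_univ_two]
    refine ⟨Complex.arg ⟨x 0, x 1⟩, ?_, ?_⟩
    · rw [← hn, Complex.norm_mul_cos_arg]
    · rw [← hn, Complex.norm_mul_sin_arg]
  set k := ‖x‖ / w ^ 2 with hk
  have hkpos : 0 < k := by positivity
  set a := (w ^ 2)⁻¹ * (cos φ * v 0 + sin φ * v 1) with ha
  set b := (w ^ 2)⁻¹ * (cos φ * v 1 - sin φ * v 0) with hb
  have hab : a ^ 2 + b ^ 2 = ‖v‖ ^ 2 / w ^ 4 := by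
    rw [EuclideanSpace.norm_sq_eq, Fin.sum_univ_two, ha, hb]
    simp only [Real.norm_eq_abs, sq_abs]
    have := sin_sq_add_cos_sq φ
    field_simp
    linear_combination (v 0 ^ 2 + v 1 ^ 2) * this
  have eU : ∀ θ, rU w (θ + φ) x = k * cos θ := by
    intro θ
    have := sin_sq_add_cos_sq φ
    rw [rU_apply, h0, h1, cos_add, sin_add, hk]
    field_simp
    linear_combination (cos θ) * this
  have eV : ∀ θ, rU w (θ + φ) v = a * cos θ + b * sin θ := by
    intro θ
    rw [rU_apply, cos_add, sin_add, ha, hb]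
    ring
  have eP : rP w x = rM (fun _ => 1) k := by
    unfold rP rM
    rw [ring_shift _ (fun t => by rw [rU_per]) φ]
    simp only [eU, mul_one]
  have eG : rG w x v = rM (fun t => a * cos t + b * sin t) k := by
    rw [rG_apply]; unfold rM
    rw [ring_shift _ (fun t => by rw [rU_per]) φ]
    simp only [eU, eV]
  have eH : rH w x v v = rM (fun t => (a * cos t + b * sin t) ^ 2) k := by
    rw [rH_apply]; unfold rM
    rw [ring_shift _ (fun t => by rw [rU_per]) φ]
    simp only [eU, eV]
  have hZ := rM_one_pos k
  refine ⟨rM (fun t => sin t ^ 2) k / rM (fun _ => 1) k, ?_, ?_, ?_⟩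
  · rw [div_le_div_iff₀ hZ two_pos]
    linarith [rM_half k hkpos.le]
  · have h1 := rM_cos_le k
    rw [rM_cos] at h1
    have : w ^ 2 / ‖x‖ = 1 / k := by rw [hk, one_div_div]
    rw [this, div_le_div_iff₀ hZ hkpos]
    linarith
  · rw [eP, eG, eH, ← hab]
    have := rM_quad k hkpos a b
    have e2 : (rM (fun _ => 1) k)⁻¹ * rM (fun t => (a * cos t + b * sin t) ^ 2) k -
        ((rM (fun _ => 1) k)⁻¹ * rM (fun t => a * cos t + b * sin t) k) ^ 2 =
        (rM (fun _ => 1) k * rM (fun t => (a * cos t + b * sin t) ^ 2) k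
      - rM (fun t => a * cos t + b * sin t) k ^ 2) / rM (fun _ => 1) k ^ 2 := by
      field_simp
    rw [e2, div_le_iff₀ (by positivity)]
    refine this.trans (le_of_eq ?_)
    field_simp

lemma ring_log (w : ℝ) (hw : 0 < w)
    (p : EuclideanSpace ℝ (Fin 2) → ℝ)
    (hp : ∀ x, p x = (1 / (2 * π)) * ∫ θ in (0 : ℝ)..(2 * π),
      (1 / (2 * π * w ^ 2)) *
        Real.exp (-‖x - (EuclideanSpace.equiv (Fin 2) ℝ).symm ![Real.cos θ, Real.sin θ]‖ ^ 2 /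
          (2 * w ^ 2))) :
    ∃ c : ℝ, ∀ y, Real.log (p y) = c - (2 * w ^ 2)⁻¹ * ‖y‖ ^ 2 + Real.log (rP w y) := by
  refine ⟨Real.log (1 / (2 * π) * (1 / (2 * π * w ^ 2))) - (2 * w ^ 2)⁻¹, fun y => ?_⟩
  have hc : 0 < 1 / (2 * π) * (1 / (2 * π * w ^ 2)) := by positivity
  have e : p y = 1 / (2 * π) * (1 / (2 * π * w ^ 2)) *
      (Real.exp (-(2 * w ^ 2)⁻¹ - (2 * w ^ 2)⁻¹ * ‖y‖ ^ 2) * rP w y) := by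
    rw [hp, intervalIntegral.integral_const_mul, ← mul_assoc]
    congr 1
    unfold rP
    rw [← intervalIntegral.integral_const_mul]
    congr 1
    ext θ
    rw [← Real.exp_add]
    congr 1
    rw [rU_apply, EuclideanSpace.norm_sq_eq, EuclideanSpace.norm_sq_eq]
    simp only [Fin.sum_univ_two, Real.norm_eq_abs, sq_abs]
    simp
    have := sin_sq_add_cos_sq θ
    field_simp
    linear_combination (-1) * this
  have hP := rP_pos w y
  rw [e, Real.log_mul hc.ne' (by positivity), Real.log_mul (by positivity) hP.ne', Real.log_exp]
  ring

/-- the inner product as a continuous bilinear map -/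
noncomputable def rI : EuclideanSpace ℝ (Fin 2) →L[ℝ] EuclideanSpace ℝ (Fin 2) →L[ℝ] ℝ :=
  (EuclideanSpace.proj (𝕜 := ℝ) (0 : Fin 2)).smulRight (EuclideanSpace.proj (𝕜 := ℝ) (0 : Fin 2)) +
  (EuclideanSpace.proj (𝕜 := ℝ) (1 : Fin 2)).smulRight (EuclideanSpace.proj (𝕜 := ℝ) (1 : Fin 2))

lemma rI_apply (y v : EuclideanSpace ℝ (Fin 2)) : rI y v = inner ℝ y v := by
  simp [rI, PiLp.inner_apply, Fin.sum_univ_two, mul_comm]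

lemma ring_hess (w : ℝ) (hw : 0 < w)
    (p : EuclideanSpace ℝ (Fin 2) → ℝ)
    (hp : ∀ x, p x = (1 / (2 * π)) * ∫ θ in (0 : ℝ)..(2 * π),
      (1 / (2 * π * w ^ 2)) *
        Real.exp (-‖x - (EuclideanSpace.equiv (Fin 2) ℝ).symm ![Real.cos θ, Real.sin θ]‖ ^ 2 /
          (2 * w ^ 2))) (x v : EuclideanSpace ℝ (Fin 2)) :
    (iteratedFDeriv ℝ 2 (fun y => Real.log (p y)) x) ![v, v] =
      - (1 / w ^ 2) * ‖v‖ ^ 2 + ((rP w x)⁻¹ * rH w x v v - ((rP w x)⁻¹ * rG w x v) ^ 2) := by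
  obtain ⟨c, hc⟩ := ring_log w hw p hp
  have h1 : fderiv ℝ (fun y => Real.log (p y)) =
      fun y => -((w ^ 2)⁻¹ • rI y) + (rP w y)⁻¹ • rG w y := by
    ext1 y
    apply HasFDerivAt.fderiv
    simp only [hc]
    have ha : HasFDerivAt (fun y : EuclideanSpace ℝ (Fin 2) => ‖y‖ ^ 2) (2 • innerSL ℝ y) y :=
      (hasStrictFDerivAt_norm_sq y).hasFDerivAt
    have := ((ha.const_mul (2 * w ^ 2)⁻¹).const_sub c).add ((rP_deriv w y).log (rP_pos w y).ne')
    refine this.congr_fderiv ?_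
    ext u
    simp [rI_apply]
    field_simp
  have h2 : HasFDerivAt (fun y => -((w ^ 2)⁻¹ • rI y) + (rP w y)⁻¹ • rG w y)
      (-((w ^ 2)⁻¹ • rI) + ((rP w x)⁻¹ • rH w x +
        ((-(rP w x ^ 2)⁻¹) • rG w x).smulRight (rG w x))) x := by
    have ha : HasFDerivAt (fun y : EuclideanSpace ℝ (Fin 2) => rI y) rI x :=
      rI.hasFDerivAt
    have hb : HasFDerivAt (fun y => (rP w y)⁻¹) ((-(rP w x ^ 2)⁻¹) • rG w x) x :=
      (hasDerivAt_inv (rP_pos w x).ne').comp_hasFDerivAt x (rP_deriv w x)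
    exact (ha.const_smul ((w ^ 2)⁻¹)).neg.add (hb.smul (rG_deriv w x))
  rw [iteratedFDeriv_two_apply, h1, h2.fderiv]
  have e : inner ℝ v v = ‖v‖ ^ 2 := real_inner_self_eq_norm_sq v
  simp [rI_apply]
  ring

/-- Let `p` be the density of the uniform distribution on the unit
circle convolved with `N(0, w² I₂)`, for `w ∈ (0, 0.01)`.  Then for `x ≠ 0` with
`r = ‖x‖`, the Hessian of `log p` satisfies `∇² log p(x) ⪯ (1/(2w⁴) − 1/w²) I₂` when
`0 < r ≤ w²`, `∇² log p(x) ⪯ (1/(w²r) − 1/w²) I₂` when `w² < r ≤ 1`, and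
`∇² log p(x) ⪯ 0` when `r > 1`. -/
theorem ring_hessian_upper_bounds (w : ℝ) (hw : w ∈ Set.Ioo (0 : ℝ) 0.01)
    (p : EuclideanSpace ℝ (Fin 2) → ℝ)
    (hp : ∀ x, p x = (1 / (2 * π)) * ∫ θ in (0 : ℝ)..(2 * π),
      (1 / (2 * π * w ^ 2)) *
        Real.exp (-‖x - (EuclideanSpace.equiv (Fin 2) ℝ).symm ![Real.cos θ, Real.sin θ]‖ ^ 2 /
          (2 * w ^ 2)))
    (x : EuclideanSpace ℝ (Fin 2)) (hx : 0 < ‖x‖) :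
    (‖x‖ ≤ w ^ 2 → ∀ v : EuclideanSpace ℝ (Fin 2),
        (iteratedFDeriv ℝ 2 (fun y => Real.log (p y)) x) ![v, v] ≤
          (1 / (2 * w ^ 4) - 1 / w ^ 2) * ‖v‖ ^ 2) ∧
    (w ^ 2 < ‖x‖ → ‖x‖ ≤ 1 → ∀ v : EuclideanSpace ℝ (Fin 2),
        (iteratedFDeriv ℝ 2 (fun y => Real.log (p y)) x) ![v, v] ≤
          (1 / (w ^ 2 * ‖x‖) - 1 / w ^ 2) * ‖v‖ ^ 2) ∧
    (1 < ‖x‖ → ∀ v : EuclideanSpace ℝ (Fin 2),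
        (iteratedFDeriv ℝ 2 (fun y => Real.log (p y)) x) ![v, v] ≤ 0) := by
  obtain ⟨hw0, -⟩ := hw
  have key : ∀ v, ∃ s : ℝ, s ≤ 1 / 2 ∧ s ≤ w ^ 2 / ‖x‖ ∧
      (iteratedFDeriv ℝ 2 (fun y => Real.log (p y)) x) ![v, v] ≤
        (s / w ^ 4 - 1 / w ^ 2) * ‖v‖ ^ 2 := by
    intro v
    obtain ⟨s, h1, h2, h3⟩ := ring_hess_bound w hw0 x v hx
    refine ⟨s, h1, h2, ?_⟩
    rw [ring_hess w hw0 p hp]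
    have : s * (‖v‖ ^ 2 / w ^ 4) = s / w ^ 4 * ‖v‖ ^ 2 := by ring
    linarith
  have hB : ∀ s : ℝ, s ≤ w ^ 2 / ‖x‖ → s / w ^ 4 ≤ 1 / (w ^ 2 * ‖x‖) := by
    intro s hs
    have : 1 / (w ^ 2 * ‖x‖) = (w ^ 2 / ‖x‖) / w ^ 4 := by field_simp
    rw [this]
    gcongr
  refine ⟨fun _ v => ?_, fun _ _ v => ?_, fun h v => ?_⟩
  · obtain ⟨s, h1, h2, h3⟩ := key v
    refine h3.trans ?_
    have : 1 / (2 * w ^ 4) = (1 / 2) / w ^ 4 := by field_simp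
    rw [this]
    gcongr
  · obtain ⟨s, h1, h2, h3⟩ := key v
    refine h3.trans ?_
    have := hB s h2
    gcongr
  · obtain ⟨s, h1, h2, h3⟩ := key v
    refine h3.trans ?_
    have h4 := hB s h2
    have h5 : 1 / (w ^ 2 * ‖x‖) ≤ 1 / w ^ 2 := by
      apply one_div_le_one_div_of_le (by positivity)
      nlinarith [sq_pos_of_pos hw0]
    exact mul_nonpos_of_nonpos_of_nonneg (by linarith) (by positivity)
end
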